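/- arXiv:1311.2809 — 3 statements merged into one kernel-verified Lean document; each statement's English description precedes it below -/
import Mathlib

section
/- Define R(B) ⊂ ℂ⁹ as the set of (η₁,...,η₉) with η₄η₅η₇ ≠ 0 satisfying |η₁²η₂³η₃⁴η₄⁴η₅⁵η₆⁶η₇³| ≤ B, |η₁²η₂²η₃³η₄²η₅³η₆⁴η₇η₈| ≤ B, |η₁η₂²η₃²η₄η₅²η₆³η₉| ≤ B and |(η₁²η₃η₈³ + η₂η₉²)/(η₄²η₅η₇³)| ≤ B, where |z| denotes z·conj(z). Then the integral V₀'(B) := ∫ 1/|η₄²η₅η₇³| dη₁...dη₉ over the set of (η₁,...,η₉) ∈ R(B) with |η₁|,|η₃|,|η₄|,|η₅|,|η₆|,|η₇| ≥ 1 and |η₁²η₃⁴η₄⁴η₅⁵η₆⁶η₇³| ≤ B satisfies 4·V₀'(B) = π⁷·α·ω_∞·B·(log B)⁶, where α = 1/6220800, ω_∞ = (12/π)·∫_{|z₀z₁²|, |z₀²z₁+z₂³|, |z₁³|, |z₁²z₂| ≤ 1} dz₀dz₁dz₂, and all integrals are with respect to Lebesgue measure on ℂ ≅ ℝ² in each complex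 variable. -/
/-!
By Tonelli, the integral over `ℂ⁹` is computed by first integrating over `(η₉, η₂, η₈)` with the
six other variables fixed and nonzero. Multiplying these three variables by suitable constants
(`lintegral_fibre`) turns the height conditions into the region whose volume defines `omegaInfty`,
and the Jacobian combines with the weight `1 / |η₄² η₅ η₇³|` to `B / |η₁ η₃ η₄ η₅ η₆ η₇|`.

What is left is the integral of `1 / |η₁ η₃ η₄ η₅ η₆ η₇|` over `|ηᵢ| ≥ 1` and
`2 log |η₁| + 4 log |η₃| + 4 log |η₄| + 5 log |η₅| + 6 log |η₆| + 3 log |η₇| ≤ log B`.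
In polar coordinates this is `π⁶` times the volume of a simplex (`lintegral_simplex`), namely
`π⁶ (log B)⁶ / (6! · 2 · 4 · 4 · 5 · 6 · 3)`, and the constants match.

All computations are done with `ENNReal`-valued integrals, so no integrability is needed.
-/

open MeasureTheory
open scoped Real Classical

/-- The height conditions defining `R(B) ⊆ ℂ⁹` (here `η i` is `η_{i+1}` of the paper,
and `|z| = z·conj z` is `Complex.normSq`). -/
def heightCond (B : ℝ) (η : Fin 9 → ℂ) : Prop :=
  η 3 * η 4 * η 6 ≠ 0 ∧
  Complex.normSq (η 0 ^ 2 * η 1 ^ 3 * η 2 ^ 4 * η 3 ^ 4 * η 4 ^ 5 * η 5 ^ 6 * η 6 ^ 3) ≤ B ∧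
  Complex.normSq (η 0 ^ 2 * η 1 ^ 2 * η 2 ^ 3 * η 3 ^ 2 * η 4 ^ 3 * η 5 ^ 4 * η 6 * η 7) ≤ B ∧
  Complex.normSq (η 0 * η 1 ^ 2 * η 2 ^ 2 * η 3 * η 4 ^ 2 * η 5 ^ 3 * η 8) ≤ B ∧
  Complex.normSq ((η 0 ^ 2 * η 2 * η 7 ^ 3 + η 1 * η 8 ^ 2) / (η 3 ^ 2 * η 4 * η 6 ^ 3)) ≤ B

/-- The archimedean density `ω_∞` of the `E₆` cubic surface. -/
noncomputable def omegaInfty : ℝ :=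
  (12 / π) * ∫ z in {z : ℂ × ℂ × ℂ |
      Complex.normSq (z.1 * z.2.1 ^ 2) ≤ 1 ∧
      Complex.normSq (z.1 ^ 2 * z.2.1 + z.2.2 ^ 3) ≤ 1 ∧
      Complex.normSq (z.2.1 ^ 3) ≤ 1 ∧
      Complex.normSq (z.2.1 ^ 2 * z.2.2) ≤ 1}, (1 : ℝ)

/-! ### Integration over one complex variable -/

/-- Tonelli, with the `i`-th coordinate innermost. -/
lemma lintegral_insertNth {n : ℕ} (i : Fin (n + 1)) (f : (Fin (n + 1) → ℂ) → ENNReal)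
    (hf : Measurable f) :
    ∫⁻ η, f η = ∫⁻ y : Fin n → ℂ, ∫⁻ x : ℂ, f (i.insertNth x y) := by
  have h := (volume_preserving_piFinSuccAbove (fun _ : Fin (n + 1) => ℂ) i).symm
  rw [← h.lintegral_comp hf]
  exact lintegral_prod_symm' _ (hf.comp h.measurable)

/-- Multiplication by `a` scales Lebesgue measure on `ℂ` by `|a| = a * conj a`, the determinant
of the corresponding `ℝ`-linear map. -/
lemma lintegral_comp_mul_left (a : ℂ) (ha : a ≠ 0) (f : ℂ → ENNReal) :
    ∫⁻ x, f x = ENNReal.ofReal (Complex.normSq a) * ∫⁻ z, f (a * z) := by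
  have hdet : LinearMap.det (LinearMap.mulLeft ℝ a) = Complex.normSq a :=
    Algebra.norm_complex_apply a
  have hpos : 0 < Complex.normSq a := Complex.normSq_pos.2 ha
  have hmap := Measure.map_linearMap_addHaar_eq_smul_addHaar (volume : Measure ℂ)
    (f := LinearMap.mulLeft ℝ a) (by rw [hdet]; exact hpos.ne')
  rw [hdet, abs_of_pos (inv_pos.2 hpos)] at hmap
  have hemb : MeasurableEmbedding (LinearMap.mulLeft ℝ a) :=
    (Homeomorph.mulLeft₀ a ha).measurableEmbedding
  have h2 := hemb.lintegral_map (μ := volume) f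
  rw [hmap, lintegral_smul_measure] at h2
  change _ = ∫⁻ z, f (a * z) at h2
  rw [← h2, smul_eq_mul, ← mul_assoc, ← ENNReal.ofReal_mul hpos.le, mul_inv_cancel₀ hpos.ne']
  simp

/-- Radial functions on `ℂ`, integrated in polar coordinates. -/
lemma lintegral_normSq (g : ℝ → ENNReal) (hg : Measurable g) :
    ∫⁻ x : ℂ, g (Complex.normSq x) =
      ENNReal.ofReal (2 * π) * ∫⁻ r in Set.Ioi (0 : ℝ), ENNReal.ofReal r * g (r ^ 2) := by
  rw [← Complex.lintegral_comp_polarCoord_symm]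
  have h1 : ∀ p : ℝ × ℝ, Complex.normSq (Complex.polarCoord.symm p) = p.1 ^ 2 := by
    intro p
    rw [Complex.normSq_eq_norm_sq, Complex.norm_polarCoord_symm, sq_abs]
  simp_rw [h1, smul_eq_mul]
  rw [polarCoord_target, Measure.volume_eq_prod, ← Measure.prod_restrict,
    lintegral_prod_symm' _ (by
      exact (ENNReal.measurable_ofReal.comp measurable_fst).mul
        (hg.comp (measurable_fst.pow_const 2)))]
  simp only [lintegral_const, Measure.restrict_apply MeasurableSet.univ, Set.univ_inter,
    Real.volume_Ioo]
  rw [mul_comm]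
  congr 2
  ring

/-- One integration step over `|x| ≥ 1`: an antiderivative in the polar radius `r` is a multiple
of `(L - 2 e log r) ^ (n + 1)`. -/
lemma lintegral_log_pow (n : ℕ) (e L : ℝ) (he : 0 < e) :
    ∫⁻ x : ℂ, (if 1 ≤ Complex.normSq x ∧ 0 ≤ L - e * Real.log (Complex.normSq x) then
      ENNReal.ofReal ((Complex.normSq x)⁻¹ * (L - e * Real.log (Complex.normSq x)) ^ n) else 0) =
    if 0 ≤ L then ENNReal.ofReal (π * L ^ (n + 1) / (e * (n + 1))) else 0 := by
  rw [lintegral_normSq (fun t => if 1 ≤ t ∧ 0 ≤ L - e * Real.log t then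
      ENNReal.ofReal (t⁻¹ * (L - e * Real.log t) ^ n) else 0)]
  swap
  · refine Measurable.ite ?_ ?_ measurable_const
    · refine (measurableSet_le measurable_const measurable_id).inter ?_
      have : Measurable fun t => L - e * Real.log t := by fun_prop
      exact measurableSet_le measurable_const this
    · fun_prop
  have hiff : ∀ r : ℝ, 0 < r → ((1 ≤ r ^ 2 ∧ 0 ≤ L - e * Real.log (r ^ 2)) ↔
      r ∈ Set.Icc 1 (Real.exp (L / (2 * e)))) := by
    intro r hr
    rw [one_le_sq_iff₀ hr.le, Set.mem_Icc, ← Real.log_le_iff_le_exp hr, Real.log_pow,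
      le_div_iff₀ (by positivity)]
    push_cast
    refine and_congr Iff.rfl ⟨fun h => by linarith, fun h => by linarith⟩
  have hrew : ∫⁻ r in Set.Ioi (0 : ℝ), ENNReal.ofReal r *
        (if 1 ≤ r ^ 2 ∧ 0 ≤ L - e * Real.log (r ^ 2) then
          ENNReal.ofReal ((r ^ 2)⁻¹ * (L - e * Real.log (r ^ 2)) ^ n) else 0) =
      ∫⁻ r in Set.Icc 1 (Real.exp (L / (2 * e))),
        ENNReal.ofReal (r⁻¹ * (L - 2 * e * Real.log r) ^ n) := by
    rw [← lintegral_indicator measurableSet_Ioi, ← lintegral_indicator measurableSet_Icc]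
    refine lintegral_congr fun r => ?_
    by_cases hr : 0 < r
    · rw [Set.indicator_of_mem (show r ∈ Set.Ioi 0 from hr)]
      by_cases hm : r ∈ Set.Icc 1 (Real.exp (L / (2 * e)))
      · rw [if_pos ((hiff r hr).2 hm), Set.indicator_of_mem hm, ← ENNReal.ofReal_mul hr.le,
          Real.log_pow]
        congr 1
        push_cast
        field_simp
      · rw [if_neg (mt (hiff r hr).1 hm), Set.indicator_of_notMem hm, mul_zero]
    · rw [Set.indicator_of_notMem (show r ∉ Set.Ioi 0 from hr), Set.indicator_of_notMem]
      intro h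
      linarith [h.1]
  rw [hrew]
  by_cases hL : 0 ≤ L
  · rw [if_pos hL]
    set M := Real.exp (L / (2 * e)) with hM
    have h1M : 1 ≤ M := Real.one_le_exp (by positivity)
    have hne : ∀ r ∈ Set.Icc 1 M, r ≠ 0 := fun r hr => by linarith [hr.1]
    have hcont : ContinuousOn (fun r => r⁻¹ * (L - 2 * e * Real.log r) ^ n) (Set.Icc 1 M) :=
      (continuousOn_id.inv₀ hne).mul
        ((continuousOn_const.sub (continuousOn_const.mul
          (Real.continuousOn_log.mono fun r hr => hne r hr))).pow n)
    rw [← ofReal_integral_eq_lintegral_ofReal hcont.integrableOn_Icc, integral_Icc_eq_integral_Ioc,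
      ← intervalIntegral.integral_of_le h1M,
      intervalIntegral.integral_eq_sub_of_hasDerivAt
        (f := fun r => -(L - 2 * e * Real.log r) ^ (n + 1) / (2 * e * (n + 1)))]
    · rw [← ENNReal.ofReal_mul (by positivity)]
      congr 1
      rw [hM, Real.log_exp, Real.log_one]
      have : L - 2 * e * (L / (2 * e)) = 0 := by field_simp; ring
      rw [this]
      field_simp
      simp
    · intro r hr
      rw [Set.uIcc_of_le h1M] at hr
      have := ((((Real.hasDerivAt_log (hne r hr)).const_mul (2 * e)).const_sub L).pow
        (n + 1)).neg.div_const (2 * e * (n + 1))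
      refine HasDerivAt.congr_deriv this ?_
      have := hne r hr
      push_cast
      field_simp
    · refine ContinuousOn.intervalIntegrable ?_
      rwa [Set.uIcc_of_le h1M]
    · filter_upwards [ae_restrict_mem measurableSet_Icc] with r hr
      have hr0 : 0 < r := by linarith [hr.1]
      have h := ((hiff r hr0).2 hr).2
      rw [Real.log_pow] at h
      push_cast at h
      exact mul_nonneg (inv_nonneg.2 hr0.le) (pow_nonneg (by linarith) n)
  · rw [if_neg hL, Set.Icc_eq_empty]
    · simp
    · rw [not_le]
      rw [← Real.exp_zero, Real.exp_lt_exp]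
      exact div_neg_of_neg_of_pos (not_le.1 hL) (by positivity)

/-! ### The simplex volume -/

lemma measurable_simplex (n : ℕ) (e : Fin n → ℝ) (L : ℝ) :
    Measurable fun x : Fin n → ℂ => if (∀ i, 1 ≤ Complex.normSq (x i)) ∧
        ∑ i, e i * Real.log (Complex.normSq (x i)) ≤ L then
        ENNReal.ofReal (∏ i, (Complex.normSq (x i))⁻¹) else 0 := by
  have hns : ∀ i : Fin n, Measurable fun x : Fin n → ℂ => Complex.normSq (x i) :=
    fun i => Complex.continuous_normSq.measurable.comp (measurable_pi_apply i)
  refine Measurable.ite ?_ ?_ measurable_const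
  swap
  · fun_prop
  have hsum : Measurable fun x : Fin n → ℂ => ∑ i, e i * Real.log (Complex.normSq (x i)) := by
    fun_prop
  refine MeasurableSet.inter ?_ (measurableSet_le hsum measurable_const)
  change MeasurableSet {x : Fin n → ℂ | ∀ i, 1 ≤ Complex.normSq (x i)}
  rw [Set.ofPred_forall]
  exact MeasurableSet.iInter fun i => measurableSet_le measurable_const (hns i)

/-- The volume `L ^ n / (n! ∏ eᵢ)` of the simplex `uᵢ ≥ 0`, `∑ eᵢ uᵢ ≤ L`, seen through
`uᵢ = log |xᵢ|`; each complex variable contributes a factor `π`. -/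
lemma lintegral_simplex (n : ℕ) : ∀ (e : Fin n → ℝ) (_ : ∀ i, 0 < e i) (L : ℝ),
    ∫⁻ x : Fin n → ℂ, (if (∀ i, 1 ≤ Complex.normSq (x i)) ∧
        ∑ i, e i * Real.log (Complex.normSq (x i)) ≤ L then
        ENNReal.ofReal (∏ i, (Complex.normSq (x i))⁻¹) else 0) =
      if 0 ≤ L then ENNReal.ofReal (π ^ n * L ^ n / (n.factorial * ∏ i, e i)) else 0 := by
  induction n with
  | zero =>
    intro e he L
    rw [volume_pi, Measure.pi_of_empty _ 0]
    simp
  | succ n ih =>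
    intro e he L
    have hP : 0 < ∏ i : Fin n, e i.succ := Finset.prod_pos fun i _ => he _
    have h := (volume_preserving_piFinSuccAbove (fun _ : Fin (n + 1) => ℂ) 0).symm
    rw [← h.lintegral_comp (measurable_simplex _ e L)]
    have h2 := lintegral_prod (μ := (volume : Measure ℂ)) (ν := (volume : Measure (Fin n → ℂ))) _
      ((measurable_simplex _ e L).comp h.measurable).aemeasurable
    refine h2.trans ?_
    have key : ∀ x : ℂ, (∫⁻ y : Fin n → ℂ, ((fun x : Fin (n + 1) → ℂ =>
        if (∀ i, 1 ≤ Complex.normSq (x i)) ∧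
        ∑ i, e i * Real.log (Complex.normSq (x i)) ≤ L then
        ENNReal.ofReal (∏ i, (Complex.normSq (x i))⁻¹) else 0) ∘
        (MeasurableEquiv.piFinSuccAbove (fun _ : Fin (n + 1) => ℂ) 0).symm) (x, y)) =
        ENNReal.ofReal (π ^ n / (n.factorial * ∏ i : Fin n, e i.succ)) *
        (if 1 ≤ Complex.normSq x ∧ 0 ≤ L - e 0 * Real.log (Complex.normSq x) then
        ENNReal.ofReal ((Complex.normSq x)⁻¹ *
          (L - e 0 * Real.log (Complex.normSq x)) ^ n) else 0) := by
      intro x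
      have hx : ∀ y : Fin n → ℂ, ((fun x : Fin (n + 1) → ℂ =>
          if (∀ i, 1 ≤ Complex.normSq (x i)) ∧
          ∑ i, e i * Real.log (Complex.normSq (x i)) ≤ L then
          ENNReal.ofReal (∏ i, (Complex.normSq (x i))⁻¹) else 0) ∘
          (MeasurableEquiv.piFinSuccAbove (fun _ : Fin (n + 1) => ℂ) 0).symm) (x, y) =
          (if 1 ≤ Complex.normSq x then ENNReal.ofReal (Complex.normSq x)⁻¹ else 0) *
          (if (∀ i, 1 ≤ Complex.normSq (y i)) ∧
            ∑ i, e i.succ * Real.log (Complex.normSq (y i)) ≤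
              L - e 0 * Real.log (Complex.normSq x) then
            ENNReal.ofReal (∏ i, (Complex.normSq (y i))⁻¹) else 0) := by
        intro y
        have h0 : (MeasurableEquiv.piFinSuccAbove (fun _ : Fin (n + 1) => ℂ) 0).symm (x, y) =
          Fin.cons x y := by
          simp [MeasurableEquiv.piFinSuccAbove, Fin.consEquiv]
        simp only [Function.comp_apply, h0, Fin.forall_fin_succ, Fin.sum_univ_succ,
          Fin.prod_univ_succ, Fin.cons_zero, Fin.cons_succ, le_sub_iff_add_le']
        by_cases h1 : 1 ≤ Complex.normSq x
        · simp only [h1, true_and, if_true, mul_ite, mul_zero]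
          rw [ENNReal.ofReal_mul (inv_nonneg.2 (Complex.normSq_nonneg _))]
        · simp [h1]
      simp_rw [hx]
      rw [lintegral_const_mul _ (measurable_simplex _ _ _), ih _ fun i => he _]
      by_cases h1 : 1 ≤ Complex.normSq x
      · by_cases hL : 0 ≤ L - e 0 * Real.log (Complex.normSq x)
        · simp only [h1, hL, and_self, if_true]
          rw [← ENNReal.ofReal_mul (by positivity), ← ENNReal.ofReal_mul (by positivity)]
          congr 1
          ring
        · simp [hL]
      · simp [h1]
    simp_rw [key]
    rw [lintegral_const_mul' _ _ ENNReal.ofReal_ne_top, lintegral_log_pow n _ _ (he 0)]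
    by_cases hL : 0 ≤ L
    · simp only [hL, if_true]
      rw [← ENNReal.ofReal_mul (by positivity), Fin.prod_univ_succ, Nat.factorial_succ]
      congr 1
      have := he 0
      push_cast
      field_simp
      ring
    · simp [hL]

/-! ### The integral over `(η₉, η₂, η₈)` -/

/-- The region of `ℂ³` whose volume defines `omegaInfty`. -/
def densityRegion : Set (ℂ × ℂ × ℂ) :=
  {z | Complex.normSq (z.1 * z.2.1 ^ 2) ≤ 1 ∧
      Complex.normSq (z.1 ^ 2 * z.2.1 + z.2.2 ^ 3) ≤ 1 ∧
      Complex.normSq (z.2.1 ^ 3) ≤ 1 ∧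
      Complex.normSq (z.2.1 ^ 2 * z.2.2) ≤ 1}

lemma measurable_normSq : Measurable fun z : ℂ => Complex.normSq z :=
  Complex.continuous_normSq.measurable

lemma measurableSet_densityRegion : MeasurableSet densityRegion := by
  have h : ∀ g : ℂ × ℂ × ℂ → ℂ, Measurable g → MeasurableSet {z | Complex.normSq (g z) ≤ 1} :=
    fun g hg => measurableSet_le (measurable_normSq.comp hg) measurable_const
  exact (h _ (by fun_prop)).inter ((h _ (by fun_prop)).inter
    ((h _ (by fun_prop)).inter (h _ (by fun_prop))))

lemma lintegral_scale_three (F : ℂ → ℂ → ℂ → ENNReal) (a b c : ℂ) (ha : a ≠ 0) (hb : b ≠ 0)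
    (hc : c ≠ 0) :
    ∫⁻ x, ∫⁻ y, ∫⁻ z, F x y z =
      ENNReal.ofReal (Complex.normSq a * Complex.normSq b * Complex.normSq c) *
        ∫⁻ x, ∫⁻ y, ∫⁻ z, F (a * x) (b * y) (c * z) := by
  rw [lintegral_comp_mul_left a ha (fun x => ∫⁻ y, ∫⁻ z, F x y z)]
  have h1 : ∀ x, ∫⁻ y, ∫⁻ z, F x y z = ENNReal.ofReal (Complex.normSq b) *
      (ENNReal.ofReal (Complex.normSq c) * ∫⁻ y, ∫⁻ z, F x (b * y) (c * z)) := by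
    intro x
    rw [lintegral_comp_mul_left b hb (fun y => ∫⁻ z, F x y z)]
    congr 1
    rw [← lintegral_const_mul' _ _ ENNReal.ofReal_ne_top]
    exact lintegral_congr fun y => lintegral_comp_mul_left c hc (F x (b * y))
  simp_rw [h1]
  rw [lintegral_const_mul' _ _ ENNReal.ofReal_ne_top, lintegral_const_mul' _ _ ENNReal.ofReal_ne_top,
    ENNReal.ofReal_mul (mul_nonneg (Complex.normSq_nonneg _) (Complex.normSq_nonneg _)),
    ENNReal.ofReal_mul (Complex.normSq_nonneg _), mul_assoc, mul_assoc]

/-- The integral over `(η₉, η₂, η₈)` with the other variables fixed. The substitution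
`η₉ = t z₀`, `η₂ = t z₁ / (η₁ η₃² (η₄ η₅ η₆ η₇)³)`, `η₈ = t z₂ / (η₁ η₃ η₄ η₅ η₆ η₇)` turns the
height conditions into those defining `densityRegion`. -/
lemma lintegral_fibre (B : ℝ) (hB : 0 < B) (u v w s p q : ℂ) (hu : u ≠ 0) (hv : v ≠ 0)
    (hw : w ≠ 0) (hs : s ≠ 0) (hp : p ≠ 0) (hq : q ≠ 0) :
    ∫⁻ x : ℂ, ∫⁻ y : ℂ, ∫⁻ z : ℂ,
      (if heightCond B ![u, y, v, w, s, p, q, z, x] then (1 : ENNReal) else 0) =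
    ENNReal.ofReal (B * Complex.normSq w * Complex.normSq q ^ 2 /
      (Complex.normSq u * Complex.normSq v * Complex.normSq p)) * volume densityRegion := by
  -- Only the absolute value of `t` matters: it is chosen so that, after the substitution,
  -- each height is `B` times the corresponding quantity bounded by `1` in `densityRegion`.
  obtain ⟨t, ht⟩ : ∃ t : ℂ, Complex.normSq t ^ 3 =
      B * Complex.normSq (u * v ^ 2 * w ^ 5 * s ^ 4 * p ^ 3 * q ^ 6) := by
    set X := B * Complex.normSq (u * v ^ 2 * w ^ 5 * s ^ 4 * p ^ 3 * q ^ 6) with hX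
    have hX0 : 0 ≤ X := mul_nonneg hB.le (Complex.normSq_nonneg _)
    refine ⟨((X ^ (1 / 6 : ℝ) : ℝ) : ℂ), ?_⟩
    rw [Complex.normSq_ofReal, ← pow_two, ← pow_mul, ← Real.rpow_natCast, ← Real.rpow_mul hX0]
    norm_num
  have hN : ∀ {z : ℂ}, z ≠ 0 → Complex.normSq z ≠ 0 := fun h => (Complex.normSq_pos.2 h).ne'
  have ht0 : t ≠ 0 := by
    rintro rfl
    have : 0 < B * Complex.normSq (u * v ^ 2 * w ^ 5 * s ^ 4 * p ^ 3 * q ^ 6) :=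
      mul_pos hB (Complex.normSq_pos.2 (by simp [hu, hv, hw, hs, hp, hq]))
    rw [← ht] at this
    simp at this
  have nu := hN hu
  have nv := hN hv
  have nw := hN hw
  have ns := hN hs
  have np := hN hp
  have nq := hN hq
  have nt := hN ht0
  -- Eliminating `B` in favour of `t` makes all remaining scaling identities monomial.
  have hBeq : B = Complex.normSq t ^ 3 / (Complex.normSq u * Complex.normSq v ^ 2 *
      Complex.normSq w ^ 5 * Complex.normSq s ^ 4 * Complex.normSq p ^ 3 *
      Complex.normSq q ^ 6) := by
    rw [ht]
    simp only [map_mul, map_pow]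
    field_simp
  rw [lintegral_scale_three _ t (t / (u * v ^ 2 * (w * s * p * q) ^ 3))
    (t / (u * v * w * s * p * q)) ht0 (by positivity) (by positivity)]
  congr 1
  · congr 1
    rw [hBeq]
    simp only [map_mul, map_pow, map_div₀]
    field_simp
  · rw [← lintegral_indicator_one measurableSet_densityRegion, Measure.volume_eq_prod,
      lintegral_prod _ (by
        exact (measurable_one.indicator measurableSet_densityRegion).aemeasurable)]
    refine lintegral_congr fun x => ?_
    rw [Measure.volume_eq_prod, lintegral_prod _ (by
      exact ((measurable_one.indicator measurableSet_densityRegion).comp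
        measurable_prodMk_left).aemeasurable)]
    refine lintegral_congr fun y => lintegral_congr fun z => ?_
    have hiff : heightCond B ![u, t / (u * v ^ 2 * (w * s * p * q) ^ 3) * y, v, w, s, p, q,
        t / (u * v * w * s * p * q) * z, t * x] ↔ (x, y, z) ∈ densityRegion := by
      have key : ∀ {a b : ℂ}, Complex.normSq a = B * Complex.normSq b →
          (Complex.normSq a ≤ B ↔ Complex.normSq b ≤ 1) := by
        intro a b h
        rw [h, mul_le_iff_le_one_right hB]
      have e1 : (u ^ 2 * v * (t / (u * v * w * s * p * q) * z) ^ 3 +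
          t / (u * v ^ 2 * (w * s * p * q) ^ 3) * y * (t * x) ^ 2) / (w ^ 2 * s * q ^ 3) =
          t ^ 3 / (u * v ^ 2 * w ^ 5 * s ^ 4 * p ^ 3 * q ^ 6) * (x ^ 2 * y + z ^ 3) := by
        field_simp
        ring
      simp only [heightCond, densityRegion, Set.mem_ofPred_eq, Matrix.cons_val]
      rw [e1, key (b := y ^ 3), key (b := y ^ 2 * z), key (b := x * y ^ 2),
        key (b := x ^ 2 * y + z ^ 3)]
      · have : w * s * q ≠ 0 := by positivity
        tauto
      all_goals
        rw [hBeq]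
        simp only [map_mul, map_pow, map_div₀]
        try field_simp
    by_cases hm : (x, y, z) ∈ densityRegion
    · rw [if_pos (hiff.2 hm), Set.indicator_of_mem hm]
      rfl
    · rw [if_neg (mt hiff.1 hm), Set.indicator_of_notMem hm]

/-! ### The integral over `ℂ⁹` -/

lemma measurableSet_heightCond (B : ℝ) : MeasurableSet {η : Fin 9 → ℂ | heightCond B η} := by
  have h : ∀ g : (Fin 9 → ℂ) → ℂ, Measurable g →
      MeasurableSet {η | Complex.normSq (g η) ≤ B} :=
    fun g hg => measurableSet_le (measurable_normSq.comp hg) measurable_const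
  have h0 : MeasurableSet {η : Fin 9 → ℂ | η 3 * η 4 * η 6 ≠ 0} := by
    have : Measurable fun η : Fin 9 → ℂ => η 3 * η 4 * η 6 := by fun_prop
    exact (measurableSet_eq_fun this measurable_const).compl
  exact h0.inter ((h _ (by fun_prop)).inter ((h _ (by fun_prop)).inter
    ((h _ (by fun_prop)).inter (h _ (by fun_prop)))))

/-- Tonelli on `ℂ⁹`, with the coordinates `η₈, η₂, η₉` (indices `7, 1, 8`) innermost. -/
lemma lintegral_nine (f : (Fin 9 → ℂ) → ENNReal) (hf : Measurable f) :
    ∫⁻ η, f η = ∫⁻ a : Fin 6 → ℂ, ∫⁻ x : ℂ, ∫⁻ y : ℂ, ∫⁻ z : ℂ,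
      f ![a 0, y, a 1, a 2, a 3, a 4, a 5, z, x] := by
  have hins : ∀ {n : ℕ} (i : Fin (n + 1)),
      Measurable fun p : (Fin n → ℂ) × ℂ => (i.insertNth p.2 p.1 : Fin (n + 1) → ℂ) := fun i =>
    (volume_preserving_piFinSuccAbove (fun _ => ℂ) i).symm.measurable.comp measurable_swap
  have m1 : Measurable fun a : Fin 8 → ℂ =>
      ∫⁻ z : ℂ, f ((7 : Fin 9).insertNth z a : Fin 9 → ℂ) :=
    Measurable.lintegral_prod_right (hf.comp (hins 7))
  have m2 : Measurable fun b : Fin 7 → ℂ => ∫⁻ y : ℂ, ∫⁻ z : ℂ,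
      f ((7 : Fin 9).insertNth z ((1 : Fin 8).insertNth y b : Fin 8 → ℂ) : Fin 9 → ℂ) :=
    Measurable.lintegral_prod_right (m1.comp (hins 1))
  rw [lintegral_insertNth 7 f hf, lintegral_insertNth 1 _ m1, lintegral_insertNth 6 _ m2]
  refine lintegral_congr fun a => lintegral_congr fun x => lintegral_congr fun y =>
    lintegral_congr fun z => ?_
  congr 1
  ext i
  fin_cases i <;> rfl

/-- Lemma 6.1: `4·V₀'(B) = π⁷·α·ω_∞·B·(log B)⁶` with
`α = 1/6220800`. -/
theorem stmt_15 (B : ℝ) (hB : 1 ≤ B) :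
    4 * ∫ η in {η : Fin 9 → ℂ | heightCond B η ∧
        (∀ i ∈ ({0, 2, 3, 4, 5, 6} : Finset (Fin 9)), 1 ≤ Complex.normSq (η i)) ∧
        Complex.normSq (η 0 ^ 2 * η 2 ^ 4 * η 3 ^ 4 * η 4 ^ 5 * η 5 ^ 6 * η 6 ^ 3) ≤ B},
        1 / Complex.normSq (η 3 ^ 2 * η 4 * η 6 ^ 3)
      = π ^ 7 * (1 / 6220800) * omegaInfty * B * Real.log B ^ 6 := by
  have hB0 : 0 < B := by linarith
  set D : Set (Fin 9 → ℂ) := {η | heightCond B η ∧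
        (∀ i ∈ ({0, 2, 3, 4, 5, 6} : Finset (Fin 9)), 1 ≤ Complex.normSq (η i)) ∧
        Complex.normSq (η 0 ^ 2 * η 2 ^ 4 * η 3 ^ 4 * η 4 ^ 5 * η 5 ^ 6 * η 6 ^ 3) ≤ B} with hD
  have hDm : MeasurableSet D := by
    refine (measurableSet_heightCond B).inter (MeasurableSet.inter ?_ ?_)
    · change MeasurableSet {η : Fin 9 → ℂ |
        ∀ i ∈ ({0, 2, 3, 4, 5, 6} : Finset (Fin 9)), 1 ≤ Complex.normSq (η i)}
      simp only [Set.ofPred_forall]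
      exact MeasurableSet.iInter fun i => MeasurableSet.iInter fun _ =>
        measurableSet_le measurable_const (measurable_normSq.comp (measurable_pi_apply i))
    · refine measurableSet_le (measurable_normSq.comp ?_) measurable_const
      fun_prop
  set g : (Fin 9 → ℂ) → ENNReal :=
    fun η => ENNReal.ofReal (1 / Complex.normSq (η 3 ^ 2 * η 4 * η 6 ^ 3)) with hg
  have hw : Measurable fun η : Fin 9 → ℂ => 1 / Complex.normSq (η 3 ^ 2 * η 4 * η 6 ^ 3) :=
    measurable_const.div (measurable_normSq.comp (by fun_prop))
  have hgm : Measurable g := hw.ennreal_ofReal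
  set e : Fin 6 → ℝ := ![2, 4, 4, 5, 6, 3] with he
  -- The inner integral over `(η₉, η₂, η₈)` separates from the weight in the other variables.
  have hfib : ∀ a : Fin 6 → ℂ, ∫⁻ x : ℂ, ∫⁻ y : ℂ, ∫⁻ z : ℂ,
      D.indicator g ![a 0, y, a 1, a 2, a 3, a 4, a 5, z, x] =
      (ENNReal.ofReal B * volume densityRegion) * (if (∀ i, 1 ≤ Complex.normSq (a i)) ∧
        ∑ i, e i * Real.log (Complex.normSq (a i)) ≤ Real.log B then
        ENNReal.ofReal (∏ i, (Complex.normSq (a i))⁻¹) else 0) := by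
    intro a
    have hind : ∀ x y z : ℂ, D.indicator g ![a 0, y, a 1, a 2, a 3, a 4, a 5, z, x] =
        (if (∀ i, 1 ≤ Complex.normSq (a i)) ∧
          Complex.normSq (a 0 ^ 2 * a 1 ^ 4 * a 2 ^ 4 * a 3 ^ 5 * a 4 ^ 6 * a 5 ^ 3) ≤ B then
          ENNReal.ofReal (1 / Complex.normSq (a 2 ^ 2 * a 3 * a 5 ^ 3)) else 0) *
        (if heightCond B ![a 0, y, a 1, a 2, a 3, a 4, a 5, z, x] then 1 else 0) := by
      intro x y z
      rw [Set.indicator_apply]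
      have hmem : ![a 0, y, a 1, a 2, a 3, a 4, a 5, z, x] ∈ D ↔
          heightCond B ![a 0, y, a 1, a 2, a 3, a 4, a 5, z, x] ∧
          ((∀ i, 1 ≤ Complex.normSq (a i)) ∧
          Complex.normSq (a 0 ^ 2 * a 1 ^ 4 * a 2 ^ 4 * a 3 ^ 5 * a 4 ^ 6 * a 5 ^ 3) ≤ B) := by
        simp [hD, Fin.forall_fin_succ]
      simp only [hmem]
      by_cases h1 : heightCond B ![a 0, y, a 1, a 2, a 3, a 4, a 5, z, x]
      · simp only [h1, true_and, if_true, mul_one]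
        rfl
      · simp [h1]
    simp_rw [hind]
    by_cases h1 : ∀ i, 1 ≤ Complex.normSq (a i)
    · have hpos : ∀ i, 0 < Complex.normSq (a i) := fun i => by linarith [h1 i]
      have hne : ∀ i, a i ≠ 0 := fun i => Complex.normSq_pos.1 (hpos i)
      have hlog : ∑ i, e i * Real.log (Complex.normSq (a i)) ≤ Real.log B ↔
          Complex.normSq (a 0 ^ 2 * a 1 ^ 4 * a 2 ^ 4 * a 3 ^ 5 * a 4 ^ 6 * a 5 ^ 3) ≤ B := by
        rw [← Real.log_le_log_iff (Complex.normSq_pos.2 (by simp [hne])) hB0]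
        have n0 := (hpos 0).ne'
        have n1 := (hpos 1).ne'
        have n2 := (hpos 2).ne'
        have n3 := (hpos 3).ne'
        have n4 := (hpos 4).ne'
        have n5 := (hpos 5).ne'
        simp only [map_mul, map_pow]
        rw [Real.log_mul (by positivity) (by positivity),
          Real.log_mul (by positivity) (by positivity), Real.log_mul (by positivity) (by positivity),
          Real.log_mul (by positivity) (by positivity), Real.log_mul (by positivity) (by positivity)]
        simp only [Real.log_pow, Fin.sum_univ_six, he, Matrix.cons_val]
        push_cast
        rfl
      simp_rw [lintegral_const_mul' _ _ (show (if (∀ i, 1 ≤ Complex.normSq (a i)) ∧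
          Complex.normSq (a 0 ^ 2 * a 1 ^ 4 * a 2 ^ 4 * a 3 ^ 5 * a 4 ^ 6 * a 5 ^ 3) ≤ B then
          ENNReal.ofReal (1 / Complex.normSq (a 2 ^ 2 * a 3 * a 5 ^ 3)) else 0) ≠ ⊤ by
            split_ifs <;> simp)]
      rw [lintegral_fibre B hB0 _ _ _ _ _ _ (hne 0) (hne 1) (hne 2) (hne 3) (hne 4) (hne 5)]
      simp only [hlog]
      split_ifs with h2
      · rw [← mul_assoc, ← ENNReal.ofReal_mul
          (one_div_nonneg.2 (Complex.normSq_nonneg _)), mul_right_comm (ENNReal.ofReal B),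
          ← ENNReal.ofReal_mul hB0.le]
        congr 2
        have n0 := (hpos 0).ne'
        have n1 := (hpos 1).ne'
        have n2 := (hpos 2).ne'
        have n3 := (hpos 3).ne'
        have n4 := (hpos 4).ne'
        have n5 := (hpos 5).ne'
        simp only [map_mul, map_pow, Fin.prod_univ_six]
        field_simp
      · simp
    · simp [h1]
  have hom : omegaInfty = 12 / π * (volume densityRegion).toReal := by
    change 12 / π * ∫ z in densityRegion, (1 : ℝ) = _
    simp [Measure.real]
  -- Passing to `ENNReal` makes finiteness of the volume of `densityRegion` irrelevant: `toReal`
  -- is multiplicative also at `⊤`.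
  rw [integral_eq_lintegral_of_nonneg_ae
    (Filter.Eventually.of_forall fun η => one_div_nonneg.2 (Complex.normSq_nonneg _))
    hw.aestronglyMeasurable]
  change 4 * (∫⁻ η in D, g η).toReal = _
  rw [← lintegral_indicator hDm, lintegral_nine _ (hgm.indicator hDm)]
  simp_rw [hfib]
  rw [lintegral_const_mul _ (measurable_simplex _ _ _), lintegral_simplex 6 e (by
      intro i
      fin_cases i <;> norm_num [he]), if_pos (Real.log_nonneg hB), ENNReal.toReal_mul,
    ENNReal.toReal_mul, ENNReal.toReal_ofReal hB0.le, ENNReal.toReal_ofReal, hom]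
  · simp only [Fin.prod_univ_six, he, Matrix.cons_val]
    norm_num [Nat.factorial]
    field_simp
    ring
  · have : 0 ≤ Real.log B := Real.log_nonneg hB
    have : 0 < ∏ i, e i := by
      simp only [Fin.prod_univ_six, he, Matrix.cons_val]
      norm_num
    positivity
end

section
/- For B ≥ 3, the difference D(B) := ∫ B^{5/6} / |η₁⁴η₂³η₃²η₄²η₅η₇³|^{1/6} dη₁···dη₇, taken over all (η₁,...,η₇) ∈ ℂ⁷ with |η₁|,|η₃|,|η₄|,|η₅|,|η₆|,|η₇| ≥ 1, |η₂| < 1, and |η₁²η₃⁴η₄⁴η₅⁵η₆⁶η₇³| ≤ B, satisfies D(B) = O(B·(log B)⁵), where |z| = z·conj(z) and integration is against Lebesgue measure on ℂ ≅ ℝ² in each variable. -/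
/-!
Write `t i` for `Complex.normSq (η i)`. The only variable whose range is cut out by the height
condition alone, and which is absent from the integrand, is `η 5`: for fixed values of the others
it stays in a disc of area `π (B / P) ^ (1 / 6)`, where
`P = t₀ ^ 2 * t₂ ^ 4 * t₃ ^ 4 * t₄ ^ 5 * t₆ ^ 3`. Multiplying the integrand by this area makes all
exponents collapse to `π B * t₁ ^ (-1 / 2) / (t₀ t₂ t₃ t₄ t₆)` (`fibre_bound`). The height condition
also forces `1 ≤ t i ≤ B` for the five variables in the denominator, so what remains is dominated
by a product of functions of one complex variable. By polar coordinates each of the five factors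
`1 / t i` contributes at most `2 π log B`, and the factor `t₁ ^ (-1 / 2)` on the unit disc
contributes at most `2 π`. All of this is carried out with lower Lebesgue integrals, so that
integrability never has to be discussed.
-/

open MeasureTheory
open scoped Real Classical

/-- Polar coordinates. Only `≤` is stated, because it holds without measurability of `φ`. -/
lemma lintegral_radial_le (φ : ℝ → ENNReal) :
    ∫⁻ z : ℂ, φ (Complex.normSq z) ≤
      ENNReal.ofReal (2 * π) * ∫⁻ r in Set.Ioi (0 : ℝ), ENNReal.ofReal r * φ (r ^ 2) := by
  rw [← Complex.lintegral_comp_polarCoord_symm]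
  have h : ∀ p : ℝ × ℝ, Complex.normSq (Complex.polarCoord.symm p) = p.1 ^ 2 := by
    intro p
    rw [Complex.normSq_eq_norm_sq, Complex.norm_polarCoord_symm, sq_abs]
  simp only [h, smul_eq_mul, polarCoord_target]
  rw [Measure.volume_eq_prod, ← Measure.prod_restrict]
  refine (lintegral_prod_le _).trans ?_
  simp only [lintegral_const, Measure.restrict_apply, MeasurableSet.univ, Set.univ_inter,
    Real.volume_Ioo]
  rw [lintegral_mul_const' _ _ ENNReal.ofReal_ne_top, mul_comm]
  gcongr
  linarith

/-- The dominating function `1 / |z|²` for a variable with `1 ≤ |z|² ≤ B`. -/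
noncomputable def invAnnulus (B : ℝ) (z : ℂ) : ENNReal :=
  (Set.Icc 1 B).indicator (fun t => ENNReal.ofReal (1 / t)) (Complex.normSq z)

/-- The dominating function `1 / |z|` for the variable in the open unit disc; its (junk) value `0`
at `z = 0` agrees with that of the integrand. -/
noncomputable def invSqrtDisc (z : ℂ) : ENNReal :=
  (Set.Iio 1).indicator (fun t : ℝ => ENNReal.ofReal (1 / t ^ ((1 : ℝ) / 2))) (Complex.normSq z)

lemma measurable_invAnnulus (B : ℝ) : Measurable (invAnnulus B) := by
  have h : Measurable ((Set.Icc 1 B).indicator (fun t : ℝ => ENNReal.ofReal (1 / t))) :=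
    Measurable.indicator (by fun_prop) measurableSet_Icc
  exact h.comp Complex.continuous_normSq.measurable

lemma measurable_invSqrtDisc : Measurable invSqrtDisc := by
  have h : Measurable
      ((Set.Iio 1).indicator (fun t : ℝ => ENNReal.ofReal (1 / t ^ ((1 : ℝ) / 2)))) :=
    Measurable.indicator (by fun_prop) measurableSet_Iio
  exact h.comp Complex.continuous_normSq.measurable

lemma lintegral_invAnnulus_le {B : ℝ} (hB : 3 ≤ B) :
    ∫⁻ z, invAnnulus B z ≤ ENNReal.ofReal (2 * π * Real.log B) := by
  refine (lintegral_radial_le _).trans ?_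
  rw [ENNReal.ofReal_mul (p := 2 * π) (by positivity)]
  refine mul_le_mul' le_rfl ?_
  have hint : IntervalIntegrable (fun r : ℝ => r⁻¹) volume 1 B := by
    apply intervalIntegrable_inv_iff.2
    right
    rw [Set.uIcc_of_le (by linarith)]
    intro h; linarith [h.1]
  calc _ ≤ ∫⁻ r : ℝ, (Set.Icc 1 B).indicator (fun r => ENNReal.ofReal r⁻¹) r := by
        refine (lintegral_mono_ae ?_).trans (setLIntegral_le_lintegral (Set.Ioi (0 : ℝ)) _)
        filter_upwards [ae_restrict_mem measurableSet_Ioi] with r hr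
        have hr : 0 < r := hr
        -- On `1 ≤ r ^ 2 ≤ B` one has `1 ≤ r ≤ B`; replacing `√B` by `B` only costs a factor `2`.
        by_cases h : r ^ 2 ∈ Set.Icc 1 B
        · have h1 : 1 ≤ r := by
            have := h.1
            by_contra! h'
            nlinarith
          have h2 : r ≤ B := by nlinarith [h.2]
          rw [Set.indicator_of_mem h, Set.indicator_of_mem (show r ∈ Set.Icc 1 B from ⟨h1, h2⟩),
            ← ENNReal.ofReal_mul hr.le]
          apply ENNReal.ofReal_le_ofReal
          apply le_of_eq
          field_simp
        · rw [Set.indicator_of_notMem h]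
          simp
    _ = ENNReal.ofReal (Real.log B) := by
        rw [lintegral_indicator measurableSet_Icc, ← restrict_Ioc_eq_restrict_Icc,
          ← ofReal_integral_eq_lintegral_ofReal hint.1,
          ← intervalIntegral.integral_of_le (by linarith), integral_inv_of_pos one_pos (by linarith),
          div_one]
        filter_upwards [ae_restrict_mem measurableSet_Ioc] with r hr
        exact inv_nonneg.2 (by linarith [hr.1])

lemma lintegral_invSqrtDisc_le : ∫⁻ z, invSqrtDisc z ≤ ENNReal.ofReal (2 * π) := by
  refine (lintegral_radial_le _).trans ?_
  refine le_trans ?_ (mul_one (ENNReal.ofReal (2 * π))).le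
  gcongr
  calc _ ≤ ∫⁻ r : ℝ, (Set.Ioo 0 1).indicator (fun r => 1) r := by
        refine (lintegral_mono_ae ?_).trans (setLIntegral_le_lintegral (Set.Ioi (0 : ℝ)) _)
        filter_upwards [ae_restrict_mem measurableSet_Ioi] with r hr
        have hr : 0 < r := hr
        by_cases h : r ^ 2 ∈ Set.Iio (1 : ℝ)
        · have h1 : r < 1 := by
            have : r ^ 2 < 1 := h
            nlinarith
          rw [Set.indicator_of_mem h, Set.indicator_of_mem (show r ∈ Set.Ioo 0 1 from ⟨hr, h1⟩),
            ← ENNReal.ofReal_mul hr.le, ← Real.sqrt_eq_rpow, Real.sqrt_sq hr.le]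
          rw [mul_one_div_cancel hr.ne', ENNReal.ofReal_one]
        · rw [Set.indicator_of_notMem h]
          simp
    _ ≤ 1 := by
        rw [lintegral_indicator measurableSet_Ioo]
        simp

lemma lintegral_pi_succAbove_le {n : ℕ} (i : Fin (n + 1)) (F : (Fin (n + 1) → ℂ) → ENNReal) :
    ∫⁻ η, F η ≤ ∫⁻ y : Fin n → ℂ, ∫⁻ z : ℂ, F (i.insertNth z y) := by
  have h := (volume_preserving_piFinSuccAbove (fun _ : Fin (n + 1) => ℂ) i).symm
  rw [← h.lintegral_comp_emb (MeasurableEquiv.measurableEmbedding _), Measure.volume_eq_prod,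
    ← lintegral_prod_swap]
  exact lintegral_prod_le _

lemma lintegral_pi_prod_le : ∀ (n : ℕ) (g : Fin n → ℂ → ENNReal), (∀ i, Measurable (g i)) →
    ∫⁻ y : Fin n → ℂ, ∏ i, g i (y i) ≤ ∏ i, ∫⁻ z, g i z
  | 0, g, _ => by simp [volume_pi, Measure.pi_empty_univ]
  | n + 1, g, hg => by
    refine (lintegral_pi_succAbove_le 0 _).trans ?_
    simp only [Fin.prod_univ_succ, Fin.insertNth_zero', Fin.cons_zero, Fin.cons_succ]
    have hm : Measurable fun y : Fin n → ℂ => ∏ i, g i.succ (y i) :=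
      Finset.measurable_prod _ fun i _ => (hg _).comp (measurable_pi_apply i)
    simp_rw [lintegral_mul_const _ (hg 0)]
    rw [lintegral_const_mul _ hm]
    gcongr
    exact lintegral_pi_prod_le n (fun i => g i.succ) fun i => hg _

/-- The exponents balance: the integrand times the squared radius of the disc left to `η 5`. -/
lemma exponent_balance {B a b c d e f : ℝ} (hB : 0 < B) (ha : 1 ≤ a) (hb : 0 ≤ b) (hc : 1 ≤ c)
    (hd : 1 ≤ d) (he : 1 ≤ e) (hf : 1 ≤ f) :
    B ^ ((5 : ℝ) / 6) / (a ^ 4 * b ^ 3 * c ^ 2 * d ^ 2 * e * f ^ 3) ^ ((1 : ℝ) / 6) *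
      (B / (a ^ 2 * c ^ 4 * d ^ 4 * e ^ 5 * f ^ 3)) ^ ((1 : ℝ) / 6) =
    B * (1 / a * (1 / b ^ ((1 : ℝ) / 2)) * (1 / c) * (1 / d) * (1 / e) * (1 / f)) := by
  have h1 : (a ^ 4 * b ^ 3 * c ^ 2 * d ^ 2 * e * f ^ 3) ^ ((1 : ℝ) / 6) *
      (a ^ 2 * c ^ 4 * d ^ 4 * e ^ 5 * f ^ 3) ^ ((1 : ℝ) / 6) =
      a * c * d * e * f * b ^ ((1 : ℝ) / 2) := by
    rw [← Real.mul_rpow (by positivity) (by positivity),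
      show a ^ 4 * b ^ 3 * c ^ 2 * d ^ 2 * e * f ^ 3 * (a ^ 2 * c ^ 4 * d ^ 4 * e ^ 5 * f ^ 3) =
        (a * c * d * e * f) ^ 6 * b ^ 3 by ring,
      Real.mul_rpow (by positivity) (by positivity), ← Real.rpow_natCast, ← Real.rpow_natCast b,
      ← Real.rpow_mul (by positivity), ← Real.rpow_mul hb]
    norm_num
  have h2 : B ^ ((5 : ℝ) / 6) * B ^ ((1 : ℝ) / 6) = B := by
    rw [← Real.rpow_add hB]; norm_num
  rw [Real.div_rpow hB.le (by positivity), div_mul_div_comm, h1, h2]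
  simp only [div_eq_mul_inv, mul_inv]
  ring

/-- Every factor of the height is at least `1`, so each single variable is at most `B`. -/
lemma bounds_of_height {B a c d e f u : ℝ} (ha : 1 ≤ a) (hc : 1 ≤ c)
    (hd : 1 ≤ d) (he : 1 ≤ e) (hf : 1 ≤ f) (hu : 1 ≤ u)
    (h : a ^ 2 * c ^ 4 * d ^ 4 * e ^ 5 * u ^ 6 * f ^ 3 ≤ B) :
    a ≤ B ∧ c ≤ B ∧ d ≤ B ∧ e ≤ B ∧ f ≤ B := by
  have key : ∀ {x y : ℝ}, 1 ≤ x → 1 ≤ y → x ≤ x * y := fun hx hy =>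
    le_mul_of_one_le_right (by linarith) hy
  have m : ∀ {x y : ℝ}, 1 ≤ x → 1 ≤ y → 1 ≤ x * y := fun hx hy => one_le_mul_of_one_le_of_one_le hx hy
  have p : ∀ {x : ℝ} (n : ℕ), 1 ≤ x → 1 ≤ x ^ n := fun n hx => one_le_pow₀ hx
  refine ⟨?_, ?_, ?_, ?_, ?_⟩ <;> refine le_trans ?_ h
  · rw [show a ^ 2 * c ^ 4 * d ^ 4 * e ^ 5 * u ^ 6 * f ^ 3 =
      a * (a * c ^ 4 * d ^ 4 * e ^ 5 * u ^ 6 * f ^ 3) by ring]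
    exact key ha (m (m (m (m (m ha (p _ hc)) (p _ hd)) (p _ he)) (p _ hu)) (p _ hf))
  · rw [show a ^ 2 * c ^ 4 * d ^ 4 * e ^ 5 * u ^ 6 * f ^ 3 =
      c * (a ^ 2 * c ^ 3 * d ^ 4 * e ^ 5 * u ^ 6 * f ^ 3) by ring]
    exact key hc (m (m (m (m (m (p _ ha) (p _ hc)) (p _ hd)) (p _ he)) (p _ hu)) (p _ hf))
  · rw [show a ^ 2 * c ^ 4 * d ^ 4 * e ^ 5 * u ^ 6 * f ^ 3 =
      d * (a ^ 2 * c ^ 4 * d ^ 3 * e ^ 5 * u ^ 6 * f ^ 3) by ring]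
    exact key hd (m (m (m (m (m (p _ ha) (p _ hc)) (p _ hd)) (p _ he)) (p _ hu)) (p _ hf))
  · rw [show a ^ 2 * c ^ 4 * d ^ 4 * e ^ 5 * u ^ 6 * f ^ 3 =
      e * (a ^ 2 * c ^ 4 * d ^ 4 * e ^ 4 * u ^ 6 * f ^ 3) by ring]
    exact key he (m (m (m (m (m (p _ ha) (p _ hc)) (p _ hd)) (p _ he)) (p _ hu)) (p _ hf))
  · rw [show a ^ 2 * c ^ 4 * d ^ 4 * e ^ 5 * u ^ 6 * f ^ 3 =
      f * (a ^ 2 * c ^ 4 * d ^ 4 * e ^ 5 * u ^ 6 * f ^ 2) by ring]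
    exact key hf (m (m (m (m (m (p _ ha) (p _ hc)) (p _ hd)) (p _ he)) (p _ hu)) (p _ hf))

/-- The domain of integration. -/
def dom (B : ℝ) : Set (Fin 7 → ℂ) := {η : Fin 7 → ℂ |
          (∀ i ∈ ({0, 2, 3, 4, 5, 6} : Finset (Fin 7)), 1 ≤ Complex.normSq (η i)) ∧
          Complex.normSq (η 1) < 1 ∧
          Complex.normSq (η 0 ^ 2 * η 2 ^ 4 * η 3 ^ 4 * η 4 ^ 5 * η 5 ^ 6 * η 6 ^ 3) ≤ B}

/-- The integrand. -/
noncomputable def integrand (B : ℝ) (η : Fin 7 → ℂ) : ℝ :=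
  B ^ ((5 : ℝ) / 6) /
            Complex.normSq (η 0 ^ 4 * η 1 ^ 3 * η 2 ^ 2 * η 3 ^ 2 * η 4 * η 6 ^ 3) ^
              ((1 : ℝ) / 6)

lemma measurableSet_dom (B : ℝ) : MeasurableSet (dom B) := by
  have hn := Complex.continuous_normSq
  have h1 : IsClosed {η : Fin 7 → ℂ |
      ∀ i ∈ ({0, 2, 3, 4, 5, 6} : Finset (Fin 7)), 1 ≤ Complex.normSq (η i)} := by
    simp only [Set.ofPred_forall]
    exact isClosed_iInter fun i => isClosed_iInter fun _ =>
      isClosed_le continuous_const (hn.comp (continuous_apply i))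
  have h2 : IsOpen {η : Fin 7 → ℂ | Complex.normSq (η 1) < 1} :=
    isOpen_lt (hn.comp (continuous_apply 1)) continuous_const
  have h3 : IsClosed {η : Fin 7 → ℂ |
      Complex.normSq (η 0 ^ 2 * η 2 ^ 4 * η 3 ^ 4 * η 4 ^ 5 * η 5 ^ 6 * η 6 ^ 3) ≤ B} :=
    isClosed_le (hn.comp (by fun_prop)) continuous_const
  exact h1.measurableSet.inter (h2.measurableSet.inter h3.measurableSet)

/-- The dominating functions for `η 0, η 1, η 2, η 3, η 4, η 6`, in this order. -/
noncomputable def majorant (B : ℝ) : Fin 6 → ℂ → ENNReal :=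
  ![invAnnulus B, invSqrtDisc, invAnnulus B, invAnnulus B, invAnnulus B, invAnnulus B]

/-- Integrating out `η 5` leaves at most `π B` times a product of one-variable functions. -/
lemma fibre_bound {B : ℝ} (hB : 3 ≤ B) (y : Fin 6 → ℂ) :
    ∫⁻ z : ℂ, (dom B).indicator (fun η => ENNReal.ofReal (integrand B η))
        ((5 : Fin 7).insertNth z y) ≤
      ENNReal.ofReal (π * B) * ∏ i, majorant B i (y i) := by
  have e0 : ∀ z : ℂ, (5 : Fin 7).insertNth (α := fun _ => ℂ) z y 0 = y 0 := fun z =>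
    Fin.insertNth_apply_succAbove (α := fun _ => ℂ) (5 : Fin 7) z y 0
  have e1 : ∀ z : ℂ, (5 : Fin 7).insertNth (α := fun _ => ℂ) z y 1 = y 1 := fun z =>
    Fin.insertNth_apply_succAbove (α := fun _ => ℂ) (5 : Fin 7) z y 1
  have e2 : ∀ z : ℂ, (5 : Fin 7).insertNth (α := fun _ => ℂ) z y 2 = y 2 := fun z =>
    Fin.insertNth_apply_succAbove (α := fun _ => ℂ) (5 : Fin 7) z y 2
  have e3 : ∀ z : ℂ, (5 : Fin 7).insertNth (α := fun _ => ℂ) z y 3 = y 3 := fun z =>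
    Fin.insertNth_apply_succAbove (α := fun _ => ℂ) (5 : Fin 7) z y 3
  have e4 : ∀ z : ℂ, (5 : Fin 7).insertNth (α := fun _ => ℂ) z y 4 = y 4 := fun z =>
    Fin.insertNth_apply_succAbove (α := fun _ => ℂ) (5 : Fin 7) z y 4
  have e5 : ∀ z : ℂ, (5 : Fin 7).insertNth (α := fun _ => ℂ) z y 5 = z := fun z =>
    Fin.insertNth_apply_same (α := fun _ => ℂ) (5 : Fin 7) z y
  have e6 : ∀ z : ℂ, (5 : Fin 7).insertNth (α := fun _ => ℂ) z y 6 = y 5 := fun z =>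
    Fin.insertNth_apply_succAbove (α := fun _ => ℂ) (5 : Fin 7) z y 5
  set a := Complex.normSq (y 0) with ha
  set b := Complex.normSq (y 1) with hb
  set c := Complex.normSq (y 2) with hc
  set d := Complex.normSq (y 3) with hd
  set e := Complex.normSq (y 4) with he
  set f := Complex.normSq (y 5) with hf
  have hmem : ∀ z : ℂ, (5 : Fin 7).insertNth z y ∈ dom B →
      1 ≤ a ∧ b < 1 ∧ 1 ≤ c ∧ 1 ≤ d ∧ 1 ≤ e ∧ 1 ≤ f ∧ 1 ≤ Complex.normSq z ∧
      a ^ 2 * c ^ 4 * d ^ 4 * e ^ 5 * Complex.normSq z ^ 6 * f ^ 3 ≤ B := by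
    rintro z ⟨h1, h2, h3⟩
    rw [e0, e2, e3, e4, e5, e6] at h3
    rw [e1] at h2
    simp only [map_mul, map_pow] at h3
    have g0 := h1 0 (by decide)
    have g2 := h1 2 (by decide)
    have g3 := h1 3 (by decide)
    have g4 := h1 4 (by decide)
    have g5 := h1 5 (by decide)
    have g6 := h1 6 (by decide)
    rw [e0] at g0
    rw [e2] at g2
    rw [e3] at g3
    rw [e4] at g4
    rw [e5] at g5
    rw [e6] at g6
    exact ⟨g0, h2, g2, g3, g4, g6, g5, h3⟩
  -- Outside the box `1 ≤ t ≤ B` the fibre over `y` is empty.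
  by_cases hall : (1 ≤ a ∧ a ≤ B) ∧ b < 1 ∧ (1 ≤ c ∧ c ≤ B) ∧ (1 ≤ d ∧ d ≤ B) ∧
      (1 ≤ e ∧ e ≤ B) ∧ (1 ≤ f ∧ f ≤ B)
  · obtain ⟨ha1, hb1, hc1, hd1, he1, hf1⟩ := hall
    have hb0 : 0 ≤ b := Complex.normSq_nonneg _
    have hprod : ∏ i, majorant B i (y i) =
        ENNReal.ofReal (1 / a * (1 / b ^ ((1 : ℝ) / 2)) * (1 / c) * (1 / d) * (1 / e) * (1 / f)) := by
      have ka := ha1.1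
      have kc := hc1.1
      have kd := hd1.1
      have ke := he1.1
      have kf := hf1.1
      rw [ENNReal.ofReal_mul (by positivity), ENNReal.ofReal_mul (by positivity),
        ENNReal.ofReal_mul (by positivity), ENNReal.ofReal_mul (by positivity),
        ENNReal.ofReal_mul (by positivity), Fin.prod_univ_six]
      change invAnnulus B (y 0) * invSqrtDisc (y 1) * invAnnulus B (y 2) * invAnnulus B (y 3) *
        invAnnulus B (y 4) * invAnnulus B (y 5) = _
      simp only [invAnnulus, invSqrtDisc, ← ha, ← hb, ← hc, ← hd, ← he, ← hf]
      rw [Set.indicator_of_mem (show a ∈ Set.Icc 1 B from ha1),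
        Set.indicator_of_mem (show b ∈ Set.Iio 1 from hb1),
        Set.indicator_of_mem (show c ∈ Set.Icc 1 B from hc1),
        Set.indicator_of_mem (show d ∈ Set.Icc 1 B from hd1),
        Set.indicator_of_mem (show e ∈ Set.Icc 1 B from he1),
        Set.indicator_of_mem (show f ∈ Set.Icc 1 B from hf1)]
    have ha1 := ha1.1
    have hc1 := hc1.1
    have hd1 := hd1.1
    have he1 := he1.1
    have hf1 := hf1.1
    set P := a ^ 2 * c ^ 4 * d ^ 4 * e ^ 5 * f ^ 3 with hP
    set K := B ^ ((5 : ℝ) / 6) /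
      (a ^ 4 * b ^ 3 * c ^ 2 * d ^ 2 * e * f ^ 3) ^ ((1 : ℝ) / 6) with hK
    set X := (B / P) ^ ((1 : ℝ) / 6) with hX
    have hP0 : 0 < P := by positivity
    have hX0 : 0 ≤ X := by positivity
    have hK0 : 0 ≤ K := by positivity
    calc _ ≤ ∫⁻ z : ℂ, (Metric.closedBall (0 : ℂ) (√X)).indicator
          (fun _ => ENNReal.ofReal K) z := by
          apply lintegral_mono
          intro z
          by_cases hz : (5 : Fin 7).insertNth z y ∈ dom B
          · obtain ⟨-, -, -, -, -, -, -, hz8⟩ := hmem z hz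
            have hzX : Complex.normSq z ≤ X := by
              have h6 : Complex.normSq z ^ 6 ≤ B / P := by
                rw [le_div_iff₀ hP0, hP]
                linarith
              calc Complex.normSq z = (Complex.normSq z ^ 6) ^ ((1 : ℝ) / 6) := by
                    rw [← Real.rpow_natCast, ← Real.rpow_mul (Complex.normSq_nonneg _)]
                    norm_num
                _ ≤ X := Real.rpow_le_rpow (pow_nonneg (Complex.normSq_nonneg _) _) h6 (by norm_num)
            have hzb : z ∈ Metric.closedBall (0 : ℂ) (√X) := by
              rw [mem_closedBall_zero_iff]
              apply Real.le_sqrt_of_sq_le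
              rwa [← Complex.normSq_eq_norm_sq]
            simp only [Set.indicator_of_mem hz, Set.indicator_of_mem hzb]
            apply le_of_eq
            rw [integrand, e0, e1, e2, e3, e4, e6]
            simp only [map_mul, map_pow]
            rfl
          · simp only [Set.indicator_of_notMem hz]
            exact zero_le
      _ = ENNReal.ofReal K * (ENNReal.ofReal (√X) ^ 2 * NNReal.pi) := by
          rw [lintegral_indicator_const Metric.isClosed_closedBall.measurableSet,
            Complex.volume_closedBall]
      _ = ENNReal.ofReal (π * (K * X)) := by
          rw [← ENNReal.ofReal_pow (Real.sqrt_nonneg _), Real.sq_sqrt hX0,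
            show (NNReal.pi : ENNReal) = ENNReal.ofReal π by
              rw [← NNReal.coe_real_pi, ENNReal.ofReal_coe_nnreal],
            ← ENNReal.ofReal_mul hX0, ← ENNReal.ofReal_mul hK0]
          congr 1
          ring
      _ = _ := by
          rw [hprod, ← ENNReal.ofReal_mul (by positivity), hK, hX, hP,
            exponent_balance (by linarith) ha1 hb0 hc1 hd1 he1 hf1, mul_assoc π B]
  · have hz : ∀ z : ℂ, (5 : Fin 7).insertNth z y ∉ dom B := by
      intro z hz
      obtain ⟨g0, g1, g2, g3, g4, g5, gz, h⟩ := hmem z hz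
      obtain ⟨k0, k2, k3, k4, k5⟩ := bounds_of_height g0 g2 g3 g4 g5 gz h
      exact hall ⟨⟨g0, k0⟩, g1, ⟨g2, k2⟩, ⟨g3, k3⟩, ⟨g4, k4⟩, g5, k5⟩
    simp [Set.indicator_of_notMem (hz _)]

lemma lintegral_dom_le {B : ℝ} (hB : 3 ≤ B) :
    ∫⁻ η in dom B, ENNReal.ofReal (integrand B η) ≤
      ENNReal.ofReal ((2 * π) ^ 6 * π * B * Real.log B ^ 5) := by
  have hlog : 0 ≤ Real.log B := Real.log_nonneg (by linarith)
  have hm : ∀ i, Measurable (majorant B i) := by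
    have hA := measurable_invAnnulus B
    have hD := measurable_invSqrtDisc
    intro i
    fin_cases i
    exacts [hA, hD, hA, hA, hA, hA]
  rw [← lintegral_indicator (measurableSet_dom B)]
  calc _ ≤ ∫⁻ y : Fin 6 → ℂ, ENNReal.ofReal (π * B) * ∏ i, majorant B i (y i) :=
        (lintegral_pi_succAbove_le 5 _).trans (lintegral_mono fun y => fibre_bound hB y)
    _ = ENNReal.ofReal (π * B) * ∫⁻ y : Fin 6 → ℂ, ∏ i, majorant B i (y i) :=
        lintegral_const_mul' _ _ ENNReal.ofReal_ne_top
    _ ≤ ENNReal.ofReal (π * B) * ∏ i, ∫⁻ z, majorant B i z := by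
        gcongr
        exact lintegral_pi_prod_le 6 _ hm
    _ ≤ ENNReal.ofReal (π * B) * (ENNReal.ofReal (2 * π * Real.log B) * ENNReal.ofReal (2 * π) *
          ENNReal.ofReal (2 * π * Real.log B) * ENNReal.ofReal (2 * π * Real.log B) *
          ENNReal.ofReal (2 * π * Real.log B) * ENNReal.ofReal (2 * π * Real.log B)) := by
        rw [Fin.prod_univ_six]
        have hA := lintegral_invAnnulus_le hB
        have hD := lintegral_invSqrtDisc_le
        gcongr <;> assumption
    _ = _ := by
        have h2 : 0 ≤ 2 * π * Real.log B := by positivity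
        have h3 : 0 ≤ 2 * π := by positivity
        rw [← ENNReal.ofReal_mul (by positivity), ← ENNReal.ofReal_mul (by positivity),
          ← ENNReal.ofReal_mul (by positivity), ← ENNReal.ofReal_mul (by positivity),
          ← ENNReal.ofReal_mul (by positivity), ← ENNReal.ofReal_mul (by positivity)]
        congr 1
        ring

/-- the comparison integral
`∫_{|η₁|,|η₃|,…,|η₇| ≥ 1, |η₂| < 1, |η₁²η₃⁴η₄⁴η₅⁵η₆⁶η₇³| ≤ B}
  B^{5/6}/|η₁⁴η₂³η₃²η₄²η₅η₇³|^{1/6} dη₁⋯dη₇ = O(B (log B)⁵)`,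
where `|z| = z·conj z` and `η i` is `η_{i+1}` of the paper. -/
theorem stmt_18 :
    ∃ C : ℝ, 0 < C ∧ ∀ B : ℝ, 3 ≤ B →
      (∫ η in {η : Fin 7 → ℂ |
          (∀ i ∈ ({0, 2, 3, 4, 5, 6} : Finset (Fin 7)), 1 ≤ Complex.normSq (η i)) ∧
          Complex.normSq (η 1) < 1 ∧
          Complex.normSq (η 0 ^ 2 * η 2 ^ 4 * η 3 ^ 4 * η 4 ^ 5 * η 5 ^ 6 * η 6 ^ 3) ≤ B},
          B ^ ((5 : ℝ) / 6) /
            Complex.normSq (η 0 ^ 4 * η 1 ^ 3 * η 2 ^ 2 * η 3 ^ 2 * η 4 * η 6 ^ 3) ^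
              ((1 : ℝ) / 6))
        ≤ C * B * Real.log B ^ 5 := by
  refine ⟨(2 * π) ^ 6 * π, by positivity, fun B hB => ?_⟩
  have hlog : 0 ≤ Real.log B := Real.log_nonneg (by linarith)
  change ∫ η in dom B, integrand B η ≤ _
  have hnn : ∀ η, 0 ≤ integrand B η := fun η =>
    div_nonneg (Real.rpow_nonneg (by linarith) _) (Real.rpow_nonneg (Complex.normSq_nonneg _) _)
  -- This inequality also holds, trivially, when the Bochner integral is undefined.
  have h := enorm_integral_le_lintegral_enorm (μ := volume.restrict (dom B)) (integrand B)
  simp only [Real.enorm_of_nonneg (hnn _), Real.enorm_of_nonneg (integral_nonneg hnn)] at h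
  exact (ENNReal.ofReal_le_ofReal_iff (by positivity)).1 (h.trans (lintegral_dom_le hB))
end

section
/- Let B ≥ 1 and let the sum range over 7-tuples (I₁,...,I₇) of nonzero ideals of the ring of integers O_K of an imaginary quadratic field K satisfying N(I₁)²N(I₂)³N(I₃)⁴N(I₄)⁴N(I₅)⁵N(I₆)⁶N(I₇)³ ≤ B. Then ∑ 2^{2(ω(I₂)+ω(I₃)+ω(I₄)+ω(I₅)+ω(I₆)+ω(I₇))} · B^{5/6} / (N(I₁)^{2/3} N(I₂)^{7/6} N(I₃) N(I₄)^{8/9} N(I₅)^{10/9} N(I₆)^{4/3} N(I₇)^{2/3}) = O(B), where ω is the number of distinct prime ideal divisors and N the absolute norm. -/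
/-!
Fix `I₂, …, I₇` and put `M = N(I₂)³N(I₃)⁴N(I₄)⁴N(I₅)⁵N(I₆)⁶N(I₇)³`. The height condition says
`N(I₁) ≤ (B/M)^{1/2}`. Since there are `O(X)` nonzero ideals of norm at most `X`, the sum of
`N(I₁)^{-2/3}` over `N(I₁) ≤ X` is `O(X^{1/3})`, so summing over `I₁` gives `O(B^{1/6} M^{-1/6})`,
and together with `B^{5/6}` this is `B` times a product of factors `4^{ω(a)} N(a)^{-e}`, one for each
of `a = I₂, …, I₇`. All the exponents `e` are at least `7/6`, and `∑ 4^{ω(a)} N(a)^{-7/6}` converges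
because `4^{ω(a)} = O(N(a)^{1/12})`.

The sums over ideals are compared with sums over integers as follows: the element of largest
norm in a set of `n` nonzero ideals has norm at least `n / C`, so that
`∑ N(a)^{-s} ≤ C^s ∑_{i ≤ n} i^{-s}`.
-/

open NumberField
open scoped nonZeroDivisors Classical

/-- Number of distinct prime ideal divisors of an ideal of `𝓞 K`. -/
noncomputable def omegaI {K : Type*} [Field K] [NumberField K] (I : Ideal (𝓞 K)) : ℕ :=
  (UniqueFactorizationMonoid.factors I).toFinset.card

section Helpers

variable {K : Type*} [Field K] [NumberField K]

lemma one_le_absNorm {a : Ideal (𝓞 K)} (ha : a ≠ 0) : (1 : ℝ) ≤ (Ideal.absNorm a : ℝ) := by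
  have : Ideal.absNorm a ≠ 0 := by
    rw [Ne, Ideal.absNorm_eq_zero_iff]; exact ha
  exact_mod_cast Nat.one_le_iff_ne_zero.mpr this

/-- There are `O(X)` nonzero ideals of norm at most `X`. -/
lemma exists_card_le (K : Type*) [Field K] [NumberField K] :
    ∃ C : ℝ, 0 < C ∧ ∀ T : Finset (Ideal (𝓞 K)), (∀ a ∈ T, a ≠ 0) → ∀ X : ℝ,
      (∀ a ∈ T, (Ideal.absNorm a : ℝ) ≤ X) → 0 ≤ X → (T.card : ℝ) ≤ C * X := by
  have ht := (Ideal.tendsto_norm_le_div_atTop K).comp tendsto_natCast_atTop_atTop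
  obtain ⟨C, hC⟩ := ht.bddAbove_range
  refine ⟨max C 1, by positivity, fun T hT X hX hX0 => ?_⟩
  rcases T.eq_empty_or_nonempty with rfl | ⟨a, ha⟩
  · simp only [Finset.card_empty, Nat.cast_zero]; positivity
  have hX1 : 1 ≤ X := (one_le_absNorm (hT a ha)).trans (hX a ha)
  have hn : 1 ≤ ⌊X⌋₊ := Nat.le_floor (by simpa using hX1)
  have hn' : (0 : ℝ) < (⌊X⌋₊ : ℝ) := by exact_mod_cast hn
  have h1 := hC ⟨⌊X⌋₊, rfl⟩
  simp only [Function.comp, Nat.cast_le] at h1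
  rw [div_le_iff₀ hn'] at h1
  have hfin : Finite {I : Ideal (𝓞 K) // Ideal.absNorm I ≤ ⌊X⌋₊} :=
    (Ideal.finite_setOfPred_absNorm_le (S := 𝓞 K) ⌊X⌋₊).to_subtype
  have h2 : T.card ≤ Nat.card {I : Ideal (𝓞 K) // Ideal.absNorm I ≤ ⌊X⌋₊} := by
    rw [← Nat.card_eq_finsetCard]
    refine Nat.card_le_card_of_injective
      (fun b : T => ⟨b.1, Nat.le_floor (hX b.1 b.2)⟩) ?_
    intro b c hbc
    exact Subtype.ext (congrArg (fun x => x.1) hbc)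
  calc (T.card : ℝ) ≤ _ := Nat.cast_le.mpr h2
    _ ≤ C * ⌊X⌋₊ := h1
    _ ≤ max C 1 * X := by
      gcongr
      · exact le_max_left _ _
      · exact Nat.floor_le hX0

/-- Comparison of a power sum over ideals with a power sum over integers, by removing an ideal of
largest norm at each step. -/
lemma sum_rpow_le {C : ℝ} (hC0 : 0 < C)
    (hC : ∀ T : Finset (Ideal (𝓞 K)), (∀ a ∈ T, a ≠ 0) → ∀ X : ℝ,
      (∀ a ∈ T, (Ideal.absNorm a : ℝ) ≤ X) → 0 ≤ X → (T.card : ℝ) ≤ C * X)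
    {s : ℝ} (hs : 0 ≤ s) (T : Finset (Ideal (𝓞 K))) (hT : ∀ a ∈ T, a ≠ 0) :
    ∑ a ∈ T, (Ideal.absNorm a : ℝ) ^ (-s) ≤
      C ^ s * ∑ i ∈ Finset.range T.card, ((i : ℝ) + 1) ^ (-s) := by
  induction T using Finset.induction_on_max_value (fun a : Ideal (𝓞 K) => Ideal.absNorm a) with
  | empty => simp
  | insert a S haS hmax ih =>
    have hcard := hC _ hT (Ideal.absNorm a) (by
      intro b hb
      rcases Finset.mem_insert.mp hb with rfl | hb
      · exact le_rfl
      · exact_mod_cast hmax b hb) (by positivity)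
    have hN := one_le_absNorm (hT a (Finset.mem_insert_self _ _))
    rw [Finset.card_insert_of_notMem haS] at hcard ⊢
    rw [Finset.sum_insert haS, Finset.sum_range_succ, mul_add, add_comm]
    refine add_le_add (ih fun b hb => hT b (Finset.mem_insert_of_mem hb)) ?_
    push_cast at hcard
    have h1 : ((S.card : ℝ) + 1) / C ≤ Ideal.absNorm a := by
      rw [div_le_iff₀ hC0]; linarith
    have h2 := Real.rpow_le_rpow_of_nonpos (by positivity) h1 (neg_nonpos.mpr hs)
    rw [Real.div_rpow (by positivity) hC0.le, Real.rpow_neg hC0.le, div_inv_eq_mul] at h2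
    linarith

lemma sum_range_rpow_le (n : ℕ) :
    ∑ i ∈ Finset.range n, ((i : ℝ) + 1) ^ (-(2 / 3) : ℝ) ≤ 3 * (n : ℝ) ^ (1 / 3 : ℝ) := by
  induction n with
  | zero => simp
  | succ n ih =>
    rw [Finset.sum_range_succ]
    push_cast
    set x : ℝ := (n : ℝ) ^ (1 / 3 : ℝ) with hx
    set y : ℝ := ((n : ℝ) + 1) ^ (1 / 3 : ℝ) with hy
    have hx0 : 0 ≤ x := by positivity
    have hy0 : 0 < y := by positivity
    have hxy : x ≤ y := by rw [hx, hy]; gcongr; linarith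
    have hx3 : x ^ 3 = n := by
      rw [hx, ← Real.rpow_natCast, ← Real.rpow_mul (by positivity)]; norm_num
    have hy3 : y ^ 3 = n + 1 := by
      rw [hy, ← Real.rpow_natCast, ← Real.rpow_mul (by positivity)]; norm_num
    have hy2 : ((n : ℝ) + 1) ^ (-(2 / 3) : ℝ) = 1 / y ^ 2 := by
      rw [hy, ← Real.rpow_natCast, ← Real.rpow_mul (by positivity), one_div,
        ← Real.rpow_neg (by positivity)]
      norm_num
    rw [hy2]
    -- `1 = y³ - x³ = (y - x)(y² + xy + x²) ≤ 3y²(y - x)`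
    have : 1 / y ^ 2 ≤ 3 * (y - x) := by
      rw [div_le_iff₀ (by positivity)]
      have h1 : (y - x) * (y ^ 2 + x * y + x ^ 2) = 1 := by linear_combination hy3 - hx3
      have h2 : y ^ 2 + x * y + x ^ 2 ≤ 3 * y ^ 2 := by nlinarith
      have h3 := mul_le_mul_of_nonneg_left h2 (sub_nonneg.mpr hxy)
      linarith
    linarith

/-- `∑_{N(a) ≤ X} N(a)^{-2/3} = O(X^{1/3})`. -/
lemma exists_sum_partial_le (K : Type*) [Field K] [NumberField K] :
    ∃ D : ℝ, 0 < D ∧ ∀ T : Finset (Ideal (𝓞 K)), (∀ a ∈ T, a ≠ 0) → ∀ X : ℝ, 0 ≤ X →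
      (∀ a ∈ T, (Ideal.absNorm a : ℝ) ≤ X) →
      ∑ a ∈ T, (Ideal.absNorm a : ℝ) ^ (-(2 / 3) : ℝ) ≤ D * X ^ (1 / 3 : ℝ) := by
  obtain ⟨C, hC0, hC⟩ := exists_card_le K
  refine ⟨C ^ (2 / 3 : ℝ) * (3 * C ^ (1 / 3 : ℝ)), by positivity, fun T hT X hX hTX => ?_⟩
  refine (sum_rpow_le hC0 hC (by norm_num) T hT).trans ?_
  rw [mul_assoc, mul_assoc, ← Real.mul_rpow hC0.le hX]
  have := hC T hT X hTX hX
  refine mul_le_mul_of_nonneg_left ((sum_range_rpow_le _).trans ?_) (by positivity)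
  gcongr

/-- `4^{ω(a)} = O(N(a)^ε)`: the primes `p` with `N(p)^ε ≥ 4` contribute at most `N(a)^ε`, and there
are only finitely many others. -/
lemma exists_four_pow_omega_le (K : Type*) [Field K] [NumberField K] {ε : ℝ} (hε : 0 < ε) :
    ∃ c : ℝ, 0 < c ∧ ∀ a : Ideal (𝓞 K), a ≠ 0 →
      (4 : ℝ) ^ omegaI a ≤ c * (Ideal.absNorm a : ℝ) ^ ε := by
  have hfin := Ideal.finite_setOfPred_absNorm_le (S := 𝓞 K) ⌊(4 : ℝ) ^ (1 / ε)⌋₊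
  set S := hfin.toFinset with hS
  refine ⟨4 ^ S.card, by positivity, fun a ha => ?_⟩
  set F := (UniqueFactorizationMonoid.factors a).toFinset with hF
  have hprime : ∀ p ∈ F, p ≠ 0 := fun p hp =>
    (UniqueFactorizationMonoid.prime_of_factor p (Multiset.mem_toFinset.mp hp)).ne_zero
  have hdvd : ∏ p ∈ F, p ∣ a := by
    refine dvd_trans ?_ (UniqueFactorizationMonoid.factors_prod ha).dvd
    rw [Finset.prod, Multiset.map_id', hF, Multiset.toFinset_val]
    exact Multiset.prod_dvd_prod_of_le (Multiset.dedup_le _)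
  have hNle : ∏ p ∈ F, (Ideal.absNorm p : ℝ) ≤ Ideal.absNorm a := by
    have h := map_dvd Ideal.absNorm hdvd
    rw [map_prod] at h
    have h0 : 0 < Ideal.absNorm a := by exact_mod_cast one_le_absNorm ha
    exact_mod_cast Nat.le_of_dvd h0 h
  have hpt : ∀ p ∈ F, (4 : ℝ) ≤ (if p ∈ S then 4 else 1) * (Ideal.absNorm p : ℝ) ^ ε := by
    intro p hp
    have h1 := one_le_absNorm (hprime p hp)
    split_ifs with h
    · have := Real.one_le_rpow h1 hε.le
      linarith
    · have h2 : (4 : ℝ) ^ (1 / ε) ≤ Ideal.absNorm p := by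
        simp only [hS, Set.Finite.mem_toFinset, Set.mem_ofPred_eq, not_le] at h
        exact (Nat.floor_lt (by positivity)).mp h |>.le
      have h3 := Real.rpow_le_rpow (by positivity) h2 hε.le
      rw [← Real.rpow_mul (by norm_num), one_div_mul_cancel hε.ne', Real.rpow_one] at h3
      linarith
  have hω : omegaI a = F.card := rfl
  clear_value F S
  calc (4 : ℝ) ^ omegaI a = ∏ p ∈ F, (4 : ℝ) := by rw [Finset.prod_const, hω]
    _ ≤ ∏ p ∈ F, ((if p ∈ S then 4 else 1) * (Ideal.absNorm p : ℝ) ^ ε) :=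
        Finset.prod_le_prod (fun _ _ => by norm_num) hpt
    _ = 4 ^ (F.filter (· ∈ S)).card * (∏ p ∈ F, (Ideal.absNorm p : ℝ)) ^ ε := by
        rw [Finset.prod_mul_distrib, Real.finsetProd_rpow _ _ (fun _ _ => by positivity),
          Finset.prod_ite, Finset.prod_const, Finset.prod_const_one, mul_one]
    _ ≤ 4 ^ S.card * (Ideal.absNorm a : ℝ) ^ ε := by
        have h1 : (F.filter (· ∈ S)).card ≤ S.card :=
          Finset.card_le_card fun p hp => (Finset.mem_filter.mp hp).2
        have h2 : (0 : ℝ) ≤ ∏ p ∈ F, (Ideal.absNorm p : ℝ) :=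
          Finset.prod_nonneg fun _ _ => by positivity
        have h3 : (4 : ℝ) ^ (F.filter (· ∈ S)).card ≤ 4 ^ S.card :=
          pow_le_pow_right₀ (by norm_num) h1
        have h4 := Real.rpow_le_rpow h2 hNle hε.le
        have h5 := Real.rpow_nonneg h2 ε
        have h6 : (0 : ℝ) ≤ 4 ^ S.card := pow_nonneg (by norm_num) _
        exact mul_le_mul h3 h4 h5 h6

/-- The finite partial sums of `∑ 4^{ω(a)} N(a)^{-7/6}` are bounded. -/
lemma exists_sum_omega_le (K : Type*) [Field K] [NumberField K] :
    ∃ H : ℝ, 0 < H ∧ ∀ T : Finset (Ideal (𝓞 K)), (∀ a ∈ T, a ≠ 0) →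
      ∑ a ∈ T, (4 : ℝ) ^ omegaI a * (Ideal.absNorm a : ℝ) ^ (-(7 / 6) : ℝ) ≤ H := by
  obtain ⟨C, hC0, hC⟩ := exists_card_le K
  obtain ⟨c, hc0, hc⟩ := exists_four_pow_omega_le K (ε := 1 / 12) (by norm_num)
  have hsum : Summable (fun i : ℕ => ((i : ℝ) + 1) ^ (-(13 / 12) : ℝ)) := by
    have h := (Real.summable_nat_rpow (p := -(13 / 12))).mpr (by norm_num)
    have h' := (summable_nat_add_iff 1).mpr h
    simpa using h'
  refine ⟨c * (C ^ (13 / 12 : ℝ) * (1 + ∑' i : ℕ, ((i : ℝ) + 1) ^ (-(13 / 12) : ℝ))), ?_, ?_⟩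
  · have : 0 ≤ ∑' i : ℕ, ((i : ℝ) + 1) ^ (-(13 / 12) : ℝ) := tsum_nonneg fun _ => by positivity
    positivity
  intro T hT
  calc ∑ a ∈ T, (4 : ℝ) ^ omegaI a * (Ideal.absNorm a : ℝ) ^ (-(7 / 6) : ℝ)
      ≤ ∑ a ∈ T, c * (Ideal.absNorm a : ℝ) ^ (-(13 / 12) : ℝ) := by
        refine Finset.sum_le_sum fun a ha => ?_
        have h1 := one_le_absNorm (hT a ha)
        have h2 : (Ideal.absNorm a : ℝ) ^ (-(13 / 12) : ℝ) =
            (Ideal.absNorm a : ℝ) ^ (1 / 12 : ℝ) * (Ideal.absNorm a : ℝ) ^ (-(7 / 6) : ℝ) := by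
          rw [← Real.rpow_add (by linarith)]; norm_num
        rw [h2, ← mul_assoc]
        exact mul_le_mul_of_nonneg_right (hc a (hT a ha)) (by positivity)
    _ = c * ∑ a ∈ T, (Ideal.absNorm a : ℝ) ^ (-(13 / 12) : ℝ) := by rw [Finset.mul_sum]
    _ ≤ _ := by
        refine mul_le_mul_of_nonneg_left ?_ hc0.le
        refine (sum_rpow_le hC0 hC (by norm_num) T hT).trans ?_
        refine mul_le_mul_of_nonneg_left ?_ (by positivity)
        have := hsum.sum_le_tsum (Finset.range T.card) (fun _ _ => by positivity)
        linarith

/-- The exponents left after summing over `I₁` are all at least `7/6`. -/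
lemma weight_le {B a b c d e f : ℝ} (hB : 0 < B) (ha : 1 ≤ a) (hb : 1 ≤ b) (hc : 1 ≤ c)
    (hd : 1 ≤ d) (he : 1 ≤ e) (hf : 1 ≤ f) :
    B ^ ((5 : ℝ) / 6) / (a ^ ((7 : ℝ) / 6) * b * c ^ ((8 : ℝ) / 9) * d ^ ((10 : ℝ) / 9) *
        e ^ ((4 : ℝ) / 3) * f ^ ((2 : ℝ) / 3)) *
      (√(B / (a ^ 3 * b ^ 4 * c ^ 4 * d ^ 5 * e ^ 6 * f ^ 3))) ^ (1 / 3 : ℝ) ≤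
    B * (a ^ (-(7 / 6) : ℝ) * b ^ (-(7 / 6) : ℝ) * c ^ (-(7 / 6) : ℝ) * d ^ (-(7 / 6) : ℝ) *
      e ^ (-(7 / 6) : ℝ) * f ^ (-(7 / 6) : ℝ)) := by
  have key : ∀ {x : ℝ} (_ : 1 ≤ x) (n : ℕ) (p : ℝ), 7 / 6 ≤ p + n * (1 / 6) →
      x ^ (-p) * (x ^ n) ^ (-(1 / 6) : ℝ) ≤ x ^ (-(7 / 6) : ℝ) := by
    intro x hx n p h
    have hx0 : 0 < x := by linarith
    rw [← Real.rpow_natCast, ← Real.rpow_mul hx0.le, ← Real.rpow_add hx0]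
    exact Real.rpow_le_rpow_of_exponent_le hx (by linarith)
  have ha0 : 0 < a := by linarith
  have hb0 : 0 < b := by linarith
  have hc0 : 0 < c := by linarith
  have hd0 : 0 < d := by linarith
  have he0 : 0 < e := by linarith
  have hf0 : 0 < f := by linarith
  have hsq : (√(B / (a ^ 3 * b ^ 4 * c ^ 4 * d ^ 5 * e ^ 6 * f ^ 3))) ^ (1 / 3 : ℝ) =
      B ^ (1 / 6 : ℝ) * ((a ^ 3) ^ (-(1 / 6) : ℝ) * (b ^ 4) ^ (-(1 / 6) : ℝ) *
        (c ^ 4) ^ (-(1 / 6) : ℝ) * (d ^ 5) ^ (-(1 / 6) : ℝ) * (e ^ 6) ^ (-(1 / 6) : ℝ) *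
        (f ^ 3) ^ (-(1 / 6) : ℝ)) := by
    rw [Real.sqrt_eq_rpow, ← Real.rpow_mul (by positivity), Real.div_rpow hB.le (by positivity),
      div_eq_mul_inv, ← Real.rpow_neg (by positivity)]
    iterate 5 rw [Real.mul_rpow (by positivity) (by positivity)]
    norm_num
  have hden : B ^ ((5 : ℝ) / 6) / (a ^ ((7 : ℝ) / 6) * b * c ^ ((8 : ℝ) / 9) *
      d ^ ((10 : ℝ) / 9) * e ^ ((4 : ℝ) / 3) * f ^ ((2 : ℝ) / 3)) =
      B ^ ((5 : ℝ) / 6) * (a ^ (-(7 / 6) : ℝ) * b ^ (-1 : ℝ) * c ^ (-(8 / 9) : ℝ) *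
      d ^ (-(10 / 9) : ℝ) * e ^ (-(4 / 3) : ℝ) * f ^ (-(2 / 3) : ℝ)) := by
    rw [Real.rpow_neg ha0.le, Real.rpow_neg hb0.le, Real.rpow_neg hc0.le, Real.rpow_neg hd0.le,
      Real.rpow_neg he0.le, Real.rpow_neg hf0.le, Real.rpow_one]
    field_simp
  have hBB : B ^ ((5 : ℝ) / 6) * B ^ (1 / 6 : ℝ) = B := by
    rw [← Real.rpow_add hB]; norm_num
  rw [hsq, hden]
  calc _ = (B ^ ((5 : ℝ) / 6) * B ^ (1 / 6 : ℝ)) *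
        ((a ^ (-(7 / 6) : ℝ) * (a ^ 3) ^ (-(1 / 6) : ℝ)) *
        (b ^ (-1 : ℝ) * (b ^ 4) ^ (-(1 / 6) : ℝ)) *
        (c ^ (-(8 / 9) : ℝ) * (c ^ 4) ^ (-(1 / 6) : ℝ)) *
        (d ^ (-(10 / 9) : ℝ) * (d ^ 5) ^ (-(1 / 6) : ℝ)) *
        (e ^ (-(4 / 3) : ℝ) * (e ^ 6) ^ (-(1 / 6) : ℝ)) *
        (f ^ (-(2 / 3) : ℝ) * (f ^ 3) ^ (-(1 / 6) : ℝ))) := by ring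
    _ ≤ _ := by
      rw [hBB]
      have h1 := key ha 3 (7 / 6) (by norm_num)
      have h2 := key hb 4 1 (by norm_num)
      have h3 := key hc 4 (8 / 9) (by norm_num)
      have h4 := key hd 5 (10 / 9) (by norm_num)
      have h5 := key he 6 (4 / 3) (by norm_num)
      have h6 := key hf 3 (2 / 3) (by norm_num)
      gcongr

end Helpers

/-- the error-term summation over 7-tuples of nonzero ideals with
`N(I₁)²N(I₂)³N(I₃)⁴N(I₄)⁴N(I₅)⁵N(I₆)⁶N(I₇)³ ≤ B`:
`∑ 2^{2(ω(I₂)+⋯+ω(I₇))} B^{5/6} / (N I₁^{2/3} N I₂^{7/6} N I₃ N I₄^{8/9} N I₅^{10/9}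
  N I₆^{4/3} N I₇^{2/3}) = O(B)`. -/
theorem stmt_19 {K : Type*} [Field K] [NumberField K]
    (hdeg : Module.finrank ℚ K = 2)
    (himag : ∀ v : NumberField.InfinitePlace K, v.IsComplex) :
    ∃ C : ℝ, 0 < C ∧ ∀ B : ℝ, 1 ≤ B →
      (∑ᶠ I : Fin 7 → Ideal (𝓞 K),
          if (∀ j, I j ≠ 0) ∧
              (Ideal.absNorm (I 0) : ℝ) ^ 2 * (Ideal.absNorm (I 1) : ℝ) ^ 3 *
                  (Ideal.absNorm (I 2) : ℝ) ^ 4 * (Ideal.absNorm (I 3) : ℝ) ^ 4 *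
                  (Ideal.absNorm (I 4) : ℝ) ^ 5 * (Ideal.absNorm (I 5) : ℝ) ^ 6 *
                  (Ideal.absNorm (I 6) : ℝ) ^ 3 ≤ B then
            2 ^ (2 * (omegaI (I 1) + omegaI (I 2) + omegaI (I 3) + omegaI (I 4) +
                omegaI (I 5) + omegaI (I 6))) * B ^ ((5 : ℝ) / 6) /
              ((Ideal.absNorm (I 0) : ℝ) ^ ((2 : ℝ) / 3) *
                (Ideal.absNorm (I 1) : ℝ) ^ ((7 : ℝ) / 6) *
                (Ideal.absNorm (I 2) : ℝ) *
                (Ideal.absNorm (I 3) : ℝ) ^ ((8 : ℝ) / 9) *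
                (Ideal.absNorm (I 4) : ℝ) ^ ((10 : ℝ) / 9) *
                (Ideal.absNorm (I 5) : ℝ) ^ ((4 : ℝ) / 3) *
                (Ideal.absNorm (I 6) : ℝ) ^ ((2 : ℝ) / 3))
          else 0)
        ≤ C * B := by
  obtain ⟨D, hD0, hD⟩ := exists_sum_partial_le K
  obtain ⟨H, hH0, hH⟩ := exists_sum_omega_le K
  refine ⟨D * H ^ 6, by positivity, fun B hB => ?_⟩
  have hB0 : 0 < B := by linarith
  rw [finsum_def]
  -- A `finsum` with infinite support is `0` by convention, so finiteness needs no proof here.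
  split_ifs with hfin
  swap
  · positivity
  have hT : ∀ I ∈ hfin.toFinset, (∀ j, I j ≠ 0) ∧
      (Ideal.absNorm (I 0) : ℝ) ^ 2 * (Ideal.absNorm (I 1) : ℝ) ^ 3 *
        (Ideal.absNorm (I 2) : ℝ) ^ 4 * (Ideal.absNorm (I 3) : ℝ) ^ 4 *
        (Ideal.absNorm (I 4) : ℝ) ^ 5 * (Ideal.absNorm (I 5) : ℝ) ^ 6 *
        (Ideal.absNorm (I 6) : ℝ) ^ 3 ≤ B := by
    intro I hI
    by_contra hc
    exact hfin.mem_toFinset.mp hI (if_neg hc)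
  generalize hfin.toFinset = T at hT ⊢
  set h : Ideal (𝓞 K) → ℝ :=
    fun a => (4 : ℝ) ^ omegaI a * (Ideal.absNorm a : ℝ) ^ (-(7 / 6) : ℝ) with hh
  have hh0 : ∀ a, 0 ≤ h a := fun a => by rw [hh]; positivity
  set A : Fin 6 → Finset (Ideal (𝓞 K)) := fun j => T.image (fun I => I j.succ) with hA
  have hA0 : ∀ j, ∀ a ∈ A j, a ≠ 0 := by
    intro j a ha
    obtain ⟨I, hI, rfl⟩ := Finset.mem_image.mp ha
    exact (hT I hI).1 _
  rw [← Finset.sum_fiberwise_of_maps_to (g := fun I : Fin 7 → Ideal (𝓞 K) => Fin.tail I)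
    (fun I hI => Finset.mem_image_of_mem _ hI)]
  calc _ ≤ ∑ J ∈ T.image (fun I => Fin.tail I), D * B * ∏ j, h (J j) := ?_
    _ ≤ ∑ J ∈ Fintype.piFinset A, D * B * ∏ j, h (J j) := by
      refine Finset.sum_le_sum_of_subset_of_nonneg ?_ fun J _ _ =>
        mul_nonneg (by positivity) (Finset.prod_nonneg fun j _ => hh0 _)
      intro J hJ
      obtain ⟨I, hI, rfl⟩ := Finset.mem_image.mp hJ
      exact Fintype.mem_piFinset.mpr fun j => Finset.mem_image.mpr ⟨I, hI, rfl⟩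
    _ = D * B * ∏ j, ∑ a ∈ A j, h a := by rw [← Finset.mul_sum, Finset.prod_univ_sum]
    _ ≤ D * B * ∏ _j : Fin 6, H := by
      refine mul_le_mul_of_nonneg_left (Finset.prod_le_prod
        (fun j _ => Finset.sum_nonneg fun a _ => hh0 a) fun j _ => hH _ (hA0 j)) (by positivity)
    _ = D * H ^ 6 * B := by rw [Finset.prod_const, Finset.card_univ, Fintype.card_fin]; ring
  refine Finset.sum_le_sum fun J hJ => ?_
  have hJ0 : ∀ j, J j ≠ 0 := by
    obtain ⟨I, hI, rfl⟩ := Finset.mem_image.mp hJ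
    exact fun j => (hT I hI).1 j.succ
  have hN : ∀ j, (1 : ℝ) ≤ Ideal.absNorm (J j) := fun j => one_le_absNorm (hJ0 j)
  have hNpos : ∀ j, (0 : ℝ) < Ideal.absNorm (J j) := fun j => by linarith [hN j]
  set U := T.filter (fun I => Fin.tail I = J) with hU
  have hUJ : ∀ I ∈ U, ∀ j : Fin 6, I j.succ = J j := fun I hI j =>
    congrFun (Finset.mem_filter.mp hI).2 j
  set X : ℝ := √(B / ((Ideal.absNorm (J 0) : ℝ) ^ 3 * (Ideal.absNorm (J 1) : ℝ) ^ 4 *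
    (Ideal.absNorm (J 2) : ℝ) ^ 4 * (Ideal.absNorm (J 3) : ℝ) ^ 5 *
    (Ideal.absNorm (J 4) : ℝ) ^ 6 * (Ideal.absNorm (J 5) : ℝ) ^ 3)) with hX
  set W : ℝ := B ^ ((5 : ℝ) / 6) / ((Ideal.absNorm (J 0) : ℝ) ^ ((7 : ℝ) / 6) *
    (Ideal.absNorm (J 1) : ℝ) * (Ideal.absNorm (J 2) : ℝ) ^ ((8 : ℝ) / 9) *
    (Ideal.absNorm (J 3) : ℝ) ^ ((10 : ℝ) / 9) * (Ideal.absNorm (J 4) : ℝ) ^ ((4 : ℝ) / 3) *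
    (Ideal.absNorm (J 5) : ℝ) ^ ((2 : ℝ) / 3)) with hW
  set P : ℝ := 4 ^ omegaI (J 0) * 4 ^ omegaI (J 1) * 4 ^ omegaI (J 2) * 4 ^ omegaI (J 3) *
    4 ^ omegaI (J 4) * 4 ^ omegaI (J 5) with hP
  have hW0 : 0 ≤ W := by positivity
  have hP0 : 0 ≤ P := by positivity
  have hinj : Set.InjOn (fun I : Fin 7 → Ideal (𝓞 K) => I 0) U := by
    intro I hI I' hI' h0
    funext j
    refine Fin.cases h0 (fun i => ?_) j
    rw [hUJ I hI, hUJ I' hI']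
  have hV : ∑ I ∈ U, (Ideal.absNorm (I 0) : ℝ) ^ (-(2 / 3) : ℝ) ≤ D * X ^ (1 / 3 : ℝ) := by
    rw [← Finset.sum_image (f := fun a : Ideal (𝓞 K) => (Ideal.absNorm a : ℝ) ^ (-(2 / 3) : ℝ))
      hinj]
    refine hD _ ?_ X (Real.sqrt_nonneg _) ?_
    · intro a ha
      obtain ⟨I, hI, rfl⟩ := Finset.mem_image.mp ha
      exact (hT I (Finset.mem_filter.mp hI).1).1 0
    · intro a ha
      obtain ⟨I, hI, rfl⟩ := Finset.mem_image.mp ha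
      have hb := (hT I (Finset.mem_filter.mp hI).1).2
      have e := hUJ I hI
      rw [show I 1 = J 0 from e 0, show I 2 = J 1 from e 1, show I 3 = J 2 from e 2,
        show I 4 = J 3 from e 3, show I 5 = J 4 from e 4, show I 6 = J 5 from e 5] at hb
      have := hNpos 0
      have := hNpos 1
      have := hNpos 2
      have := hNpos 3
      have := hNpos 4
      have := hNpos 5
      refine Real.le_sqrt_of_sq_le ?_
      rw [le_div_iff₀ (by positivity)]
      linarith
  calc _ = ∑ I ∈ U, P * W * (Ideal.absNorm (I 0) : ℝ) ^ (-(2 / 3) : ℝ) := by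
        refine Finset.sum_congr rfl fun I hI => ?_
        have e := hUJ I hI
        rw [if_pos (hT I (Finset.mem_filter.mp hI).1), show I 1 = J 0 from e 0, show I 2 = J 1 from e 1, show I 3 = J 2 from e 2,
          show I 4 = J 3 from e 3, show I 5 = J 4 from e 4, show I 6 = J 5 from e 5,
          Real.rpow_neg (by positivity), hP, hW, pow_mul]
        norm_num only [pow_add]
        simp only [div_eq_mul_inv, mul_inv]
        ring
    _ = P * W * ∑ I ∈ U, (Ideal.absNorm (I 0) : ℝ) ^ (-(2 / 3) : ℝ) := by rw [Finset.mul_sum]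
    _ ≤ P * W * (D * X ^ (1 / 3 : ℝ)) := mul_le_mul_of_nonneg_left hV (by positivity)
    _ = D * P * (W * X ^ (1 / 3 : ℝ)) := by ring
    _ ≤ D * P * _ := mul_le_mul_of_nonneg_left
        (weight_le hB0 (hN 0) (hN 1) (hN 2) (hN 3) (hN 4) (hN 5)) (by positivity)
    _ = D * B * ∏ j, h (J j) := by
        rw [Fin.prod_univ_six, hP, hh]
        ring
end
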